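/- arXiv:1706.00518 — 2 statements merged into one kernel-verified Lean document; each statement's English description precedes it below -/
import Mathlib

section
/- Let V be a finite-dimensional irreducible □_q-module of type 1 and diameter d. Then for each i ∈ ℤ/4ℤ, the actions A of x_i and A* of x_{i+2} on V form a q-geometric tridiagonal pair. That is: A and A* each act semisimply on V with set of distinct eigenvalues {q^{d−2n} : 0 ≤ n ≤ d}; writing V_n (resp. V*_n) for the eigenspace of A (resp. A*) with eigenvalue q^{d−2n}, one has A*V_n ⊆ V_{n−1} + V_n + V_{n+1} and A V*_n ⊆ V*_{n−1} + V*_n + V*_{n+1} for 0 ≤ n ≤ d (where V_{−1} = V_{d+1} = V*_{−1} = V*_{d+1} = 0); and there is no subspace W of V with AW ⊆ W, A*W ⊆ W, W ≠ 0, W ≠ V. -/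
/-!
The tridiagonal conditions come from the cubic relations, which say that on the `θ`-eigenspace
of `A = x_i` the operator `(A - q²θ)(A - θ)(A - q⁻²θ)A*` vanishes (`box_tridiagonal`).

For irreducibility, let `W` be a minimal nonzero subspace invariant under `A = x_i` and
`A* = x_{i+2}`, and let `r`, `s` be the lowest indices with `W ∩ V_r ≠ 0`, `W ∩ V*_s ≠ 0`.
The sum over `k` of `W ∩ (V_{r+k} + V_{r+k+1} + ⋯) ∩ (⋯ + V*_{s+k-1} + V*_{s+k})` is invariant
under `A` and `A*` and nonzero, so it equals `W`. The `q`-Weyl relations make `B = x_{i+1}` act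
triangularly on both flags, with eigenvalue `q^{2n-d}` on the step of index `n`. Hence
`(V_n + V_{n+1} + ⋯) ∩ (⋯ + V*_{m-1} + V*_m)` is zero for `m < n` (`upFlag_inf_eq_bot`) and is
contained in an eigenspace of `B` for `m = n`. It follows that `r ≤ s`, and that `W` is
`B`-invariant if `r = s` (`split_argument`). The same argument with `i + 2` in place of `i` gives
`s ≤ r`, and invariance under `x_{i+3}`. So `W` is invariant under all generators, and `W = V`.
-/

noncomputable section

open FreeAlgebra

variable (F : Type) [Field F]

/-- The defining relations of the algebra `□_q` (Terwilliger), on the free algebra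
with generators `x_i`, `i ∈ ℤ/4ℤ`. -/
inductive BoxRel (q : F) : FreeAlgebra F (ZMod 4) → FreeAlgebra F (ZMod 4) → Prop
  | rel1 (i : ZMod 4) : BoxRel q
      (q • (ι F i * ι F (i + 1)) - q⁻¹ • (ι F (i + 1) * ι F i))
      ((q - q⁻¹) • (1 : FreeAlgebra F (ZMod 4)))
  | rel2 (i : ZMod 4) : BoxRel q
      (ι F i ^ 3 * ι F (i + 2) +
        ((q ^ 3 - (q⁻¹) ^ 3) / (q - q⁻¹)) • (ι F i * ι F (i + 2) * ι F i ^ 2))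
      (((q ^ 3 - (q⁻¹) ^ 3) / (q - q⁻¹)) • (ι F i ^ 2 * ι F (i + 2) * ι F i) +
        ι F (i + 2) * ι F i ^ 3)

/-- The algebra `□_q`, presented by generators and relations. -/
abbrev BoxQ (q : F) : Type := RingQuot (BoxRel F q)

/-- The generators `x_i` of `□_q`. -/
def bx (q : F) (i : ZMod 4) : BoxQ F q :=
  RingQuot.mkAlgHom F (BoxRel F q) (ι F i)

/-- `f` acts semisimply: `V` is spanned by the eigenspaces of `f`. -/
def SemisimpleOn {V : Type} [AddCommGroup V] [Module F V] (f : Module.End F V) : Prop :=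
  (⨆ θ : F, Module.End.eigenspace f θ) = ⊤

/-- The set of (distinct) eigenvalues of `f`. -/
def EigSet {V : Type} [AddCommGroup V] [Module F V] (f : Module.End F V) : Set F :=
  {θ : F | Module.End.eigenspace f θ ≠ ⊥}

/-- The representation `π` of `A` on `V` is irreducible. -/
def IsIrrep {A V : Type} [Ring A] [Algebra F A] [AddCommGroup V] [Module F V]
    (π : A →ₐ[F] Module.End F V) : Prop :=
  Nontrivial V ∧ ∀ W : Submodule F V, (∀ a : A, ∀ v ∈ W, π a v ∈ W) → W = ⊥ ∨ W = ⊤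

/-- Isomorphism of representations of `A`. -/
def RepIso {A V W : Type} [Ring A] [Algebra F A] [AddCommGroup V] [Module F V]
    [AddCommGroup W] [Module F W]
    (π : A →ₐ[F] Module.End F V) (π' : A →ₐ[F] Module.End F W) : Prop :=
  ∃ σ : V ≃ₗ[F] W, ∀ (a : A) (v : V), σ (π a v) = π' a (σ v)

/-- The `□_q`-module given by `π` has type `1` and diameter `d`: each generator `x_i`
acts semisimply with set of distinct eigenvalues `{q^(d-2n) : 0 ≤ n ≤ d}`. -/
def Type1Diam (q : F) {V : Type} [AddCommGroup V] [Module F V]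
    (π : BoxQ F q →ₐ[F] Module.End F V) (d : ℕ) : Prop :=
  ∀ i : ZMod 4, SemisimpleOn F (π (bx F q i)) ∧
    EigSet F (π (bx F q i)) =
      {θ : F | ∃ n : ℕ, n ≤ d ∧ θ = q ^ ((d : ℤ) - 2 * (n : ℤ))}

/-- Eigenspace of `f` with eigenvalue `q^(d-2n)`, for `n : ℤ`. -/
def eigD (q : F) {V : Type} [AddCommGroup V] [Module F V]
    (f : Module.End F V) (d : ℕ) (n : ℤ) : Submodule F V :=
  Module.End.eigenspace f (q ^ ((d : ℤ) - 2 * n))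

/-! ### Flags, interpolation and the q-Weyl relation -/

section Flags

variable {K V : Type*} [Field K] [AddCommGroup V] [Module K V]

/-- The flag of partial sums `E n + E (n+1) + ⋯` of a family of subspaces indexed by `ℤ`.
Sums in the opposite direction are obtained from the family `k ↦ E (-k)`. -/
def upFlag (E : ℤ → Submodule K V) (n : ℤ) : Submodule K V :=
  ⨆ k : {k : ℤ // n ≤ k}, E k

lemma le_upFlag (E : ℤ → Submodule K V) {n k : ℤ} (h : n ≤ k) : E k ≤ upFlag E n :=
  le_iSup (fun k : {k : ℤ // n ≤ k} => E k) ⟨k, h⟩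

lemma upFlag_anti (E : ℤ → Submodule K V) {n m : ℤ} (h : n ≤ m) :
    upFlag E m ≤ upFlag E n :=
  iSup_le fun k => le_upFlag E (h.trans k.2)

/-- If `g` acts on the graded pieces of a flag by scalars `c k`, then `g - c n` shifts
the `n`-th step of the flag by one. -/
lemma upFlag_shift (E : ℤ → Submodule K V) (g : Module.End K V) (c : ℤ → K)
    (h : ∀ k, ∀ v ∈ E k, g v - c k • v ∈ upFlag E (k + 1)) (n : ℤ) :
    ∀ v ∈ upFlag E n, g v - c n • v ∈ upFlag E (n + 1) := by
  have key : upFlag E n ≤ (upFlag E (n + 1)).comap (g - c n • (1 : Module.End K V)) := by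
    refine iSup_le ?_
    rintro ⟨k, hk⟩ v hv
    simp only [Submodule.mem_comap, LinearMap.sub_apply, LinearMap.smul_apply,
      Module.End.one_apply]
    rcases hk.eq_or_lt with rfl | hlt
    · exact h _ v hv
    · have h1 := upFlag_anti E (show n + 1 ≤ k + 1 by omega) (h k v hv)
      have h2 : v ∈ upFlag E (n + 1) := le_upFlag E (show n + 1 ≤ k by omega) hv
      have h3 : g v - c n • v = (g v - c k • v) + (c k - c n) • v := by
        rw [sub_smul]; abel
      rw [h3]
      exact add_mem h1 (Submodule.smul_mem _ _ h2)
  intro v hv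
  simpa using key hv

lemma upFlag_lower (E : ℤ → Submodule K V) (g : Module.End K V)
    (h : ∀ k, ∀ v ∈ E k, g v ∈ upFlag E (k - 1)) (n : ℤ) :
    ∀ v ∈ upFlag E n, g v ∈ upFlag E (n - 1) := by
  have key : upFlag E n ≤ (upFlag E (n - 1)).comap g := by
    refine iSup_le ?_
    rintro ⟨k, hk⟩ v hv
    exact upFlag_anti E (show n - 1 ≤ k - 1 by omega) (h k v hv)
  exact fun v hv => key hv

/-- Two finite flags on which `B` acts triangularly, with opposite orders of the (distinct)
eigenvalues of `B`, meet trivially once their indices have positive sum: on such an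
intersection `B` would have two different eigenvalues. -/
lemma upFlag_inf_eq_bot (E E' : ℤ → Submodule K V) (B : Module.End K V) (b : ℤ → K)
    (hb : Function.Injective b)
    (hB : ∀ k, ∀ v ∈ E k, B v - b k • v ∈ upFlag E (k + 1))
    (hB' : ∀ k, ∀ v ∈ E' k, B v - b (-k) • v ∈ upFlag E' (k + 1))
    (N : ℤ) (hN : upFlag E N = ⊥) (hN' : upFlag E' N = ⊥)
    (n m : ℤ) (hnm : 0 < n + m) (v : V) (hv : v ∈ upFlag E n) (hv' : v ∈ upFlag E' m) :
    v = 0 := by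
  -- Induction on an upper bound for the number of remaining steps in the two flags.
  obtain ⟨t, ht⟩ : ∃ t : ℕ, 2 * N - n - m ≤ t := ⟨(2 * N - n - m).toNat, Int.self_le_toNat _⟩
  induction t generalizing n m v with
  | zero =>
    by_cases h : N ≤ n
    · simpa [hN] using upFlag_anti E h hv
    · simpa [hN'] using upFlag_anti E' (show N ≤ m by push_cast at ht; omega) hv'
  | succ t ih =>
    have h1 := upFlag_shift E B b hB n v hv
    have h2 := upFlag_shift E' B (fun k => b (-k)) hB' m v hv'
    have hB1 : B v - b n • v ∈ upFlag E' m := by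
      have : B v - b n • v = (B v - b (-m) • v) + (b (-m) - b n) • v := by
        rw [sub_smul]; abel
      rw [this]
      exact add_mem (upFlag_anti E' (by omega) h2) (Submodule.smul_mem _ _ hv')
    have hB2 : B v - b (-m) • v ∈ upFlag E n := by
      have : B v - b (-m) • v = (B v - b n • v) + (b n - b (-m)) • v := by
        rw [sub_smul]; abel
      rw [this]
      exact add_mem (upFlag_anti E (by omega) h1) (Submodule.smul_mem _ _ hv)
    push_cast at ht
    have e1 := ih (n + 1) m (by omega) _ h1 hB1 (by omega)
    have e2 := ih n (m + 1) (by omega) _ hB2 h2 (by omega)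
    have e3 : (b n - b (-m)) • v = 0 := by
      rw [sub_smul, ← sub_eq_zero.mp e1, ← sub_eq_zero.mp e2, sub_self]
    refine (smul_eq_zero.mp e3).resolve_left (sub_ne_zero.mpr fun h => ?_)
    have := hb h
    omega

/-- The split-decomposition argument. `A` and `A'` are diagonal on `E` and `E'` respectively and
act on the other family in a tridiagonal way, so the sum of the subspaces
`W ∩ (E (r+k) + ⋯) ∩ (E' (s-k) + ⋯)` is invariant under both, hence equals the minimal
invariant subspace `W`. Each summand is zero if `r + s > 0`, and lies in an eigenspace of `B`
if `r + s = 0`. -/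
lemma split_argument (E E' : ℤ → Submodule K V) (A A' B : Module.End K V)
    (θ θ' b : ℤ → K) (hb : Function.Injective b)
    (hA : ∀ k, ∀ v ∈ E k, A v = θ k • v) (hA' : ∀ k, ∀ v ∈ E' k, A' v = θ' k • v)
    (hT : ∀ k, ∀ v ∈ E k, A' v ∈ upFlag E (k - 1))
    (hT' : ∀ k, ∀ v ∈ E' k, A v ∈ upFlag E' (k - 1))
    (hB : ∀ k, ∀ v ∈ E k, B v - b k • v ∈ upFlag E (k + 1))
    (hB' : ∀ k, ∀ v ∈ E' k, B v - b (-k) • v ∈ upFlag E' (k + 1))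
    (N : ℤ) (hN : upFlag E N = ⊥) (hN' : upFlag E' N = ⊥)
    (W : Submodule K V) (hWA : ∀ v ∈ W, A v ∈ W) (hWA' : ∀ v ∈ W, A' v ∈ W)
    (hmin : ∀ U ≤ W, (∀ v ∈ U, A v ∈ U) → (∀ v ∈ U, A' v ∈ U) → U ≠ ⊥ → U = W)
    (r s : ℤ) (hr : W ≤ upFlag E r) (hs : W ⊓ upFlag E' s ≠ ⊥) :
    r + s ≤ 0 ∧ (r + s = 0 → ∀ v ∈ W, B v ∈ W) := by
  set S : ℤ → Submodule K V :=
    fun k => W ⊓ (upFlag E (r + k) ⊓ upFlag E' (s - k)) with hS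
  have hA0 : ∀ k, ∀ v ∈ E k, A v - θ k • v ∈ upFlag E (k + 1) := fun k v hv => by
    rw [hA k v hv, sub_self]; exact zero_mem _
  have hA0' : ∀ k, ∀ v ∈ E' k, A' v - θ' k • v ∈ upFlag E' (k + 1) := fun k v hv => by
    rw [hA' k v hv, sub_self]; exact zero_mem _
  have hSA : ∀ k, ∀ v ∈ S k, A v - θ (r + k) • v ∈ S (k + 1) := by
    rintro k v ⟨h0, h1, h2⟩
    refine ⟨sub_mem (hWA v h0) (Submodule.smul_mem _ _ h0), ?_, ?_⟩
    · have := upFlag_shift E A θ hA0 _ v h1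
      rwa [add_assoc] at this
    · have := upFlag_lower E' A hT' _ v h2
      rw [sub_sub] at this
      exact sub_mem this (Submodule.smul_mem _ _ (upFlag_anti E' (by omega) h2))
  have hSA' : ∀ k, ∀ v ∈ S k, A' v - θ' (s - k) • v ∈ S (k - 1) := by
    rintro k v ⟨h0, h1, h2⟩
    refine ⟨sub_mem (hWA' v h0) (Submodule.smul_mem _ _ h0), ?_, ?_⟩
    · have := upFlag_lower E A' hT _ v h1
      rw [add_sub_assoc] at this
      exact sub_mem this (Submodule.smul_mem _ _ (upFlag_anti E (by omega) h1))
    · have := upFlag_shift E' A' θ' hA0' _ v h2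
      rwa [show s - k + 1 = s - (k - 1) by ring] at this
  have hSle : ∀ k, S k ≤ ⨆ k, S k := fun k => le_iSup S k
  have hsum : (⨆ k, S k) = W := by
    refine hmin _ (iSup_le fun k => inf_le_left) ?_ ?_ ?_
    · have : (⨆ k, S k) ≤ (⨆ k, S k).comap A := iSup_le fun k v hv => by
        have := add_mem (hSle _ (hSA k v hv)) (Submodule.smul_mem _ (θ (r + k)) (hSle _ hv))
        simpa using this
      exact fun v hv => this hv
    · have : (⨆ k, S k) ≤ (⨆ k, S k).comap A' := iSup_le fun k v hv => by
        have := add_mem (hSle _ (hSA' k v hv)) (Submodule.smul_mem _ (θ' (s - k)) (hSle _ hv))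
        simpa using this
      exact fun v hv => this hv
    · intro h0
      refine hs (le_bot_iff.mp ?_)
      rw [← h0]
      refine le_trans ?_ (hSle 0)
      rintro v ⟨h1, h2⟩
      exact ⟨h1, by simpa using hr h1, by simpa using h2⟩
  have hzero := upFlag_inf_eq_bot E E' B b hb hB hB' N hN hN'
  refine ⟨?_, ?_⟩
  · by_contra hpos
    refine hs (le_bot_iff.mp (inf_le_left.trans ?_))
    rw [← hsum]
    refine iSup_le ?_
    rintro k v ⟨-, h1, h2⟩
    exact hzero (r + k) (s - k) (by omega) v h1 h2
  · intro h0
    have : W ≤ W.comap B := by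
      conv_lhs => rw [← hsum]
      refine iSup_le ?_
      rintro k v ⟨hv, h1, h2⟩
      have e1 := upFlag_shift E B b hB _ v h1
      have e2 := upFlag_shift E' B (fun k => b (-k)) hB' _ v h2
      simp only [show -(s - k) = r + k by omega] at e2
      have e3 := sub_eq_zero.mp (hzero _ _ (by omega) _ e1 e2)
      rw [Submodule.mem_comap, e3]
      exact Submodule.smul_mem _ _ hv
    exact fun v hv => this hv

/-- Lagrange interpolation: a vector killed by `(f - a)(f - b)(f - c)` with `a, b, c` distinct
is a sum of eigenvectors. -/
lemma mem_sup_eigenspace_of_cubic (f : Module.End K V) (a b c : K)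
    (hab : a ≠ b) (hac : a ≠ c) (hbc : b ≠ c) (u : V)
    (h : f (f (f u)) - (a + b + c) • f (f u) + (a * b + a * c + b * c) • f u
      - (a * b * c) • u = 0) :
    u ∈ Module.End.eigenspace f a ⊔ Module.End.eigenspace f b ⊔ Module.End.eigenspace f c := by
  have hab' := sub_ne_zero.mpr hab
  have hac' := sub_ne_zero.mpr hac
  have hbc' := sub_ne_zero.mpr hbc
  have h' : f (f (f u)) = (a + b + c) • f (f u) - (a * b + a * c + b * c) • f u
      + (a * b * c) • u := by
    rw [← sub_eq_zero, ← h]; module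
  have hu : u = ((a - b) * (a - c))⁻¹ • (f (f u) - (b + c) • f u + (b * c) • u)
      - ((a - b) * (b - c))⁻¹ • (f (f u) - (a + c) • f u + (a * c) • u)
      + ((a - c) * (b - c))⁻¹ • (f (f u) - (a + b) • f u + (a * b) • u) := by
    match_scalars <;> field_simp <;> ring
  rw [hu]
  refine add_mem (Submodule.mem_sup_left (sub_mem (Submodule.mem_sup_left ?_)
    (Submodule.mem_sup_right ?_))) (Submodule.mem_sup_right ?_) <;>
  · refine Submodule.smul_mem _ _ (Module.End.mem_eigenspace_iff.mpr ?_)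
    simp only [map_add, map_sub, map_smul, h']
    module

/-- If `qXY - q⁻¹YX = q - q⁻¹`, then `Y - θ⁻¹` maps the `θ`-eigenspace of `X` into the
`q⁻²θ`-eigenspace. -/
lemma qWeyl_left (q : K) (hq : q ≠ 0) (X Y : Module.End K V)
    (h : q • (X * Y) - q⁻¹ • (Y * X) = (q - q⁻¹) • (1 : Module.End K V))
    (θ η : K) (hθ : θ ≠ 0) (hη : q ^ 2 * η = θ) (v : V)
    (hv : v ∈ Module.End.eigenspace X θ) :
    Y v - θ⁻¹ • v ∈ Module.End.eigenspace X η := by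
  rw [Module.End.mem_eigenspace_iff] at hv ⊢
  have h1 := congrArg (fun g : Module.End K V => g v) h
  simp only [LinearMap.sub_apply, LinearMap.smul_apply, Module.End.mul_apply,
    Module.End.one_apply, hv, map_smul] at h1
  have h2 : X (Y v) = q⁻¹ • ((q⁻¹ * θ) • Y v + (q - q⁻¹) • v) := by
    rw [eq_inv_smul_iff₀ hq, ← h1]; module
  have hη' : η = (q ^ 2)⁻¹ * θ := by rw [← hη]; field_simp
  rw [map_sub, map_smul, hv, h2, hη']
  match_scalars <;> field_simp
  ring

/-- If `qXY - q⁻¹YX = q - q⁻¹`, then `X - θ⁻¹` maps the `θ`-eigenspace of `Y` into the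
`q²θ`-eigenspace. -/
lemma qWeyl_right (q : K) (hq : q ≠ 0) (X Y : Module.End K V)
    (h : q • (X * Y) - q⁻¹ • (Y * X) = (q - q⁻¹) • (1 : Module.End K V))
    (θ η : K) (hθ : θ ≠ 0) (hη : η = q ^ 2 * θ) (v : V)
    (hv : v ∈ Module.End.eigenspace Y θ) :
    X v - θ⁻¹ • v ∈ Module.End.eigenspace Y η := by
  rw [Module.End.mem_eigenspace_iff] at hv ⊢
  have h1 := congrArg (fun g : Module.End K V => g v) h
  simp only [LinearMap.sub_apply, LinearMap.smul_apply, Module.End.mul_apply,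
    Module.End.one_apply, hv, map_smul] at h1
  have h2 : Y (X v) = q • ((q * θ) • X v - (q - q⁻¹) • v) := by
    rw [← inv_smul_eq_iff₀ hq, ← h1]; module
  rw [map_sub, map_smul, hv, h2, hη]
  match_scalars <;> field_simp
  ring

end Flags

/-! ### The representation of the algebra -/

section Box

lemma zmod_four_add : ∀ i : ZMod 4, i + 2 + 2 = i := by decide

lemma zmod_four_cases :
    ∀ i j : ZMod 4, j = i ∨ j = i + 1 ∨ j = i + 2 ∨ j = i + 2 + 1 := by decide

variable {F} {q : F} {V : Type} [AddCommGroup V] [Module F V]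

lemma box_rel1 (π : BoxQ F q →ₐ[F] Module.End F V) (i : ZMod 4) :
    q • (π (bx F q i) * π (bx F q (i + 1))) - q⁻¹ • (π (bx F q (i + 1)) * π (bx F q i))
      = (q - q⁻¹) • (1 : Module.End F V) := by
  have h := RingQuot.mkAlgHom_rel F (BoxRel.rel1 (F := F) (q := q) i)
  have hmap := congrArg π h
  simpa only [bx, map_sub, map_smul, map_mul, map_one] using hmap

lemma box_rel2 (π : BoxQ F q →ₐ[F] Module.End F V) (i : ZMod 4) :
    π (bx F q i) ^ 3 * π (bx F q (i + 2)) +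
        ((q ^ 3 - (q⁻¹) ^ 3) / (q - q⁻¹)) •
          (π (bx F q i) * π (bx F q (i + 2)) * π (bx F q i) ^ 2)
      = ((q ^ 3 - (q⁻¹) ^ 3) / (q - q⁻¹)) •
          (π (bx F q i) ^ 2 * π (bx F q (i + 2)) * π (bx F q i)) +
        π (bx F q (i + 2)) * π (bx F q i) ^ 3 := by
  have h := RingQuot.mkAlgHom_rel F (BoxRel.rel2 (F := F) (q := q) i)
  have hmap := congrArg π h
  simpa only [bx, map_add, map_smul, map_mul, map_pow] using hmap

/-- A subspace invariant under the generators is invariant under the whole algebra. -/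
lemma box_invariant (π : BoxQ F q →ₐ[F] Module.End F V) (W : Submodule F V)
    (h : ∀ j, ∀ v ∈ W, π (bx F q j) v ∈ W) (a : BoxQ F q) : ∀ v ∈ W, π a v ∈ W := by
  obtain ⟨x, rfl⟩ := RingQuot.mkAlgHom_surjective F (BoxRel F q) a
  induction x using FreeAlgebra.induction with
  | grade0 r =>
    intro v hv
    rw [AlgHom.commutes, AlgHom.commutes, Module.algebraMap_end_apply]
    exact Submodule.smul_mem _ _ hv
  | grade1 j => exact h j
  | mul x y hx hy =>
    intro v hv
    rw [map_mul, map_mul]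
    exact hx _ (hy _ hv)
  | add x y hx hy =>
    intro v hv
    rw [map_add, map_add]
    exact add_mem (hx _ hv) (hy _ hv)

lemma zpow_inj_of_not_root (hq0 : q ≠ 0) (hq1 : ∀ n : ℕ, 0 < n → q ^ n ≠ 1) :
    Function.Injective (fun n : ℤ => q ^ n) := by
  have key : ∀ n : ℤ, 0 < n → q ^ n ≠ 1 := by
    intro n hn h
    lift n to ℕ using hn.le
    exact hq1 n (by exact_mod_cast hn) (by simpa using h)
  intro m n hmn
  simp only at hmn
  rcases lt_trichotomy m n with h | h | h
  · refine absurd ?_ (key (n - m) (by omega))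
    rw [zpow_sub₀ hq0, hmn, div_self (zpow_ne_zero _ hq0)]
  · exact h
  · refine absurd ?_ (key (m - n) (by omega))
    rw [zpow_sub₀ hq0, hmn, div_self (zpow_ne_zero _ hq0)]

/-- The cubic `q`-Serre relation gives the tridiagonal action of `x_{i+2}` on the
eigenspaces of `x_i`. -/
lemma box_tridiagonal (hq0 : q ≠ 0) (hq1 : ∀ n : ℕ, 0 < n → q ^ n ≠ 1)
    (π : BoxQ F q →ₐ[F] Module.End F V) (d : ℕ) (i : ZMod 4) (n : ℤ) (v : V)
    (hv : v ∈ eigD F q (π (bx F q i)) d n) :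
    π (bx F q (i + 2)) v ∈
      eigD F q (π (bx F q i)) d (n - 1) ⊔ eigD F q (π (bx F q i)) d n ⊔
        eigD F q (π (bx F q i)) d (n + 1) := by
  have hinj := zpow_inj_of_not_root hq0 hq1
  have hne : ∀ a b : ℤ, a ≠ b → q ^ a ≠ q ^ b := fun a b h e => h (hinj e)
  refine mem_sup_eigenspace_of_cubic _ _ _ _ (hne _ _ (by omega)) (hne _ _ (by omega))
    (hne _ _ (by omega)) _ ?_
  have hv' := Module.End.mem_eigenspace_iff.mp hv
  have h1 := congrArg (fun g : Module.End F V => g v) (box_rel2 π i)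
  simp only [pow_succ, pow_zero, one_mul, LinearMap.add_apply, LinearMap.smul_apply,
    Module.End.mul_apply, hv', map_smul] at h1
  have hq2 : q ^ 2 - 1 ≠ 0 := sub_ne_zero.mpr (hq1 2 (by norm_num))
  have h3 : (q * q * q - q⁻¹ * q⁻¹ * q⁻¹) / (q - q⁻¹) = q ^ 2 + 1 + (q ^ 2)⁻¹ := by
    have : q - q⁻¹ ≠ 0 := by
      intro h
      apply hq2
      field_simp at h
      linear_combination h
    field_simp
    ring
  rw [h3] at h1
  have e1 : q ^ ((d : ℤ) - 2 * (n - 1)) = q ^ 2 * q ^ ((d : ℤ) - 2 * n) := by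
    rw [← zpow_natCast, ← zpow_add₀ hq0]; congr 1; push_cast; ring
  have e2 : q ^ ((d : ℤ) - 2 * (n + 1)) = (q ^ 2)⁻¹ * q ^ ((d : ℤ) - 2 * n) := by
    rw [← zpow_natCast, ← zpow_neg, ← zpow_add₀ hq0]; congr 1; push_cast; ring
  rw [e1, e2]
  generalize q ^ ((d : ℤ) - 2 * n) = θ at *
  rw [← sub_eq_zero] at h1
  rw [← h1]
  match_scalars <;> field_simp

/-- Outside `0 ≤ k ≤ d` the eigenspaces vanish. -/
lemma eigD_eq_bot (hq0 : q ≠ 0) (hq1 : ∀ n : ℕ, 0 < n → q ^ n ≠ 1)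
    (π : BoxQ F q →ₐ[F] Module.End F V) (d : ℕ) (hT : Type1Diam F q π d) (i : ZMod 4)
    (k : ℤ) (hk : k < 0 ∨ (d : ℤ) < k) : eigD F q (π (bx F q i)) d k = ⊥ := by
  by_contra h
  have h1 : q ^ ((d : ℤ) - 2 * k) ∈ EigSet F (π (bx F q i)) := h
  rw [(hT i).2] at h1
  obtain ⟨n, hn, e⟩ := h1
  have := zpow_inj_of_not_root hq0 hq1 e
  omega

/-- The split-decomposition argument for the triple `x_i, x_{i+1}, x_{i+2}`. -/
lemma box_split (hq0 : q ≠ 0) (hq1 : ∀ n : ℕ, 0 < n → q ^ n ≠ 1)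
    (π : BoxQ F q →ₐ[F] Module.End F V) (d : ℕ) (hT : Type1Diam F q π d) (i : ZMod 4)
    (W : Submodule F V) (hWA : ∀ v ∈ W, π (bx F q i) v ∈ W)
    (hWA' : ∀ v ∈ W, π (bx F q (i + 2)) v ∈ W)
    (hmin : ∀ U ≤ W, (∀ v ∈ U, π (bx F q i) v ∈ U) → (∀ v ∈ U, π (bx F q (i + 2)) v ∈ U) →
      U ≠ ⊥ → U = W)
    (r s : ℤ) (hr : W ≤ upFlag (eigD F q (π (bx F q i)) d) r)
    (hs : W ⊓ eigD F q (π (bx F q (i + 2))) d s ≠ ⊥) :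
    r ≤ s ∧ (r = s → ∀ v ∈ W, π (bx F q (i + 1)) v ∈ W) := by
  have hinj := zpow_inj_of_not_root hq0 hq1
  have hz : ∀ k : ℤ, q ^ k ≠ 0 := fun k => zpow_ne_zero k hq0
  have h2 : ∀ a : ℤ, q ^ 2 * q ^ a = q ^ (a + 2) := fun a => by
    rw [zpow_add₀ hq0, mul_comm]; norm_cast
  have hii : i + 2 + 2 = i := zmod_four_add i
  have key := split_argument (eigD F q (π (bx F q i)) d)
    (fun k => eigD F q (π (bx F q (i + 2))) d (-k))
    (π (bx F q i)) (π (bx F q (i + 2))) (π (bx F q (i + 1)))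
    (fun k => q ^ ((d : ℤ) - 2 * k)) (fun k => q ^ ((d : ℤ) - 2 * (-k)))
    (fun k => (q ^ ((d : ℤ) - 2 * k))⁻¹)
    (fun a b h => by have := hinj (inv_injective h); omega)
    (fun k v hv => Module.End.mem_eigenspace_iff.mp hv)
    (fun k v hv => Module.End.mem_eigenspace_iff.mp hv)
    (fun k v hv => by
      have hle := fun m : ℤ => le_upFlag (eigD F q (π (bx F q i)) d) (n := k - 1) (k := m)
      exact sup_le (sup_le (hle (k - 1) le_rfl) (hle k (by omega)))
        (hle (k + 1) (by omega)) (box_tridiagonal hq0 hq1 π d i k v hv))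
    (fun k v hv => by
      have := box_tridiagonal hq0 hq1 π d (i + 2) (-k) v hv
      rw [hii] at this
      have hle : ∀ m l : ℤ, k - 1 ≤ m → l = -m → eigD F q (π (bx F q (i + 2))) d l ≤
          upFlag (fun k => eigD F q (π (bx F q (i + 2))) d (-k)) (k - 1) := by
        rintro m l hm rfl
        exact le_upFlag (fun k => eigD F q (π (bx F q (i + 2))) d (-k)) hm
      exact sup_le (sup_le (hle (k + 1) _ (by omega) (by ring)) (hle k _ (by omega) rfl))
        (hle (k - 1) _ le_rfl (by ring)) this)
    (fun k v hv => by
      refine le_upFlag (eigD F q (π (bx F q i)) d) le_rfl ?_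
      refine qWeyl_left q hq0 _ _ (box_rel1 π i) _ _ (hz _) ?_ v hv
      rw [h2]; congr 1; ring)
    (fun k v hv => by
      refine le_upFlag (fun k => eigD F q (π (bx F q (i + 2))) d (-k)) le_rfl ?_
      have hrel := box_rel1 π (i + 1)
      rw [show i + 1 + 1 = i + 2 by ring] at hrel
      refine qWeyl_right q hq0 _ _ hrel _ _ (hz _) ?_ v hv
      rw [h2]; congr 1; ring)
    ((d : ℤ) + 1)
    (by
      refine le_bot_iff.mp (iSup_le ?_)
      rintro ⟨k, hk⟩
      exact (eigD_eq_bot hq0 hq1 π d hT i k (Or.inr (by omega))).le)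
    (by
      refine le_bot_iff.mp (iSup_le ?_)
      rintro ⟨k, hk⟩
      exact (eigD_eq_bot hq0 hq1 π d hT (i + 2) (-k) (Or.inl (by omega))).le)
    W hWA hWA' hmin r (-s) hr
    (by
      intro h
      refine hs (le_bot_iff.mp (le_trans ?_ h.le))
      refine inf_le_inf le_rfl ?_
      have := le_upFlag (fun k => eigD F q (π (bx F q (i + 2))) d (-k)) (le_refl (-s))
      simpa using this)
  exact ⟨by linarith [key.1], fun h => key.2 (by linarith)⟩

/-- A nonzero invariant subspace of `x_i` has a lowest index `r` whose eigenspace it meets. -/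
lemma exists_lowest [FiniteDimensional F V]
    (π : BoxQ F q →ₐ[F] Module.End F V) (d : ℕ) (hT : Type1Diam F q π d) (i : ZMod 4)
    (W : Submodule F V) (hW : W ≠ ⊥) (hWA : ∀ v ∈ W, π (bx F q i) v ∈ W) :
    ∃ r : ℤ, W ≤ upFlag (eigD F q (π (bx F q i)) d) r ∧
      W ⊓ eigD F q (π (bx F q i)) d r ≠ ⊥ := by
  have hdec : W = ⨆ μ, W ⊓ Module.End.eigenspace (π (bx F q i)) μ :=
    Submodule.eq_iSup_inf_genEigenspace 1 hWA (hT i).1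
  have hle : ∀ μ, ∀ U : Submodule F V,
      (∀ n : ℕ, W ⊓ eigD F q (π (bx F q i)) d n ≤ U) →
      W ⊓ Module.End.eigenspace (π (bx F q i)) μ ≤ U := by
    intro μ U hU
    by_cases h : Module.End.eigenspace (π (bx F q i)) μ = ⊥
    · simp [h]
    · have h1 : μ ∈ EigSet F (π (bx F q i)) := h
      rw [(hT i).2] at h1
      obtain ⟨n, -, rfl⟩ := h1
      exact hU n
  have hex : ∃ n : ℕ, W ⊓ eigD F q (π (bx F q i)) d n ≠ ⊥ := by
    by_contra! hno
    refine hW (le_bot_iff.mp ?_)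
    rw [hdec]
    exact iSup_le fun μ => hle μ ⊥ fun n => (hno n).le
  classical
  refine ⟨Nat.find hex, ?_, Nat.find_spec hex⟩
  conv_lhs => rw [hdec]
  refine iSup_le fun μ => hle μ _ fun n => ?_
  by_cases hn : n < Nat.find hex
  · have := Nat.find_min hex hn
    rw [not_not] at this
    simp [this]
  · exact inf_le_right.trans (le_upFlag _ (by omega))

/-- A minimal nonzero subspace invariant under `x_i` and `x_{i+2}` is invariant under all four
generators: the lowest indices of `x_i` and `x_{i+2}` on it agree, by the split-decomposition
argument for `i` and for `i + 2`. -/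
lemma box_minimal_invariant [FiniteDimensional F V] (hq0 : q ≠ 0)
    (hq1 : ∀ n : ℕ, 0 < n → q ^ n ≠ 1)
    (π : BoxQ F q →ₐ[F] Module.End F V) (d : ℕ) (hT : Type1Diam F q π d) (i : ZMod 4)
    (W : Submodule F V) (hW : W ≠ ⊥) (hWA : ∀ v ∈ W, π (bx F q i) v ∈ W)
    (hWA' : ∀ v ∈ W, π (bx F q (i + 2)) v ∈ W)
    (hmin : ∀ U ≤ W, (∀ v ∈ U, π (bx F q i) v ∈ U) → (∀ v ∈ U, π (bx F q (i + 2)) v ∈ U) →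
      U ≠ ⊥ → U = W) (j : ZMod 4) : ∀ v ∈ W, π (bx F q j) v ∈ W := by
  have hii : i + 2 + 2 = i := zmod_four_add i
  obtain ⟨r, hr, hr'⟩ := exists_lowest π d hT i W hW hWA
  obtain ⟨s, hs, hs'⟩ := exists_lowest π d hT (i + 2) W hW hWA'
  have k1 := box_split hq0 hq1 π d hT i W hWA hWA' hmin r s hr hs'
  have k2 := box_split hq0 hq1 π d hT (i + 2) W hWA' (by rwa [hii])
    (by rw [hii]; exact fun U hU h h' => hmin U hU h' h) s r hs (by rwa [hii])
  have hrs : r = s := le_antisymm k1.1 k2.1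
  have hj : j = i ∨ j = i + 1 ∨ j = i + 2 ∨ j = i + 2 + 1 :=
    zmod_four_cases i j
  rcases hj with rfl | rfl | rfl | rfl
  exacts [hWA, k1.2 hrs, hWA', k2.2 hrs.symm]

end Box

/-- On a type-1 irreducible `□_q`-module of diameter `d`, the generators
`x_i, x_{i+2}` act as a `q`-geometric tridiagonal pair. -/
theorem stmt14 [IsAlgClosed F] [CharZero F] (q : F) (hq0 : q ≠ 0)
    (hq1 : ∀ n : ℕ, 0 < n → q ^ n ≠ 1)
    (V : Type) [AddCommGroup V] [Module F V] [FiniteDimensional F V]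
    (π : BoxQ F q →ₐ[F] Module.End F V) (hirr : IsIrrep F π)
    (d : ℕ) (hT : Type1Diam F q π d) :
    ∀ i : ZMod 4,
      SemisimpleOn F (π (bx F q i)) ∧
      SemisimpleOn F (π (bx F q (i + 2))) ∧
      EigSet F (π (bx F q i)) =
        {θ : F | ∃ n : ℕ, n ≤ d ∧ θ = q ^ ((d : ℤ) - 2 * (n : ℤ))} ∧
      EigSet F (π (bx F q (i + 2))) =
        {θ : F | ∃ n : ℕ, n ≤ d ∧ θ = q ^ ((d : ℤ) - 2 * (n : ℤ))} ∧
      (∀ n : ℤ, 0 ≤ n → n ≤ (d : ℤ) → ∀ v ∈ eigD F q (π (bx F q i)) d n,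
        π (bx F q (i + 2)) v ∈
          eigD F q (π (bx F q i)) d (n - 1) ⊔ eigD F q (π (bx F q i)) d n ⊔
            eigD F q (π (bx F q i)) d (n + 1)) ∧
      (∀ n : ℤ, 0 ≤ n → n ≤ (d : ℤ) → ∀ v ∈ eigD F q (π (bx F q (i + 2))) d n,
        π (bx F q i) v ∈
          eigD F q (π (bx F q (i + 2))) d (n - 1) ⊔ eigD F q (π (bx F q (i + 2))) d n ⊔
            eigD F q (π (bx F q (i + 2))) d (n + 1)) ∧
      ¬ ∃ W : Submodule F V,
          (∀ v ∈ W, π (bx F q i) v ∈ W) ∧ (∀ v ∈ W, π (bx F q (i + 2)) v ∈ W) ∧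
          W ≠ ⊥ ∧ W ≠ ⊤ := by
  intro i
  have hii : i + 2 + 2 = i := zmod_four_add i
  refine ⟨(hT i).1, (hT (i + 2)).1, (hT i).2, (hT (i + 2)).2,
    fun n _ _ v hv => box_tridiagonal hq0 hq1 π d i n v hv, fun n _ _ v hv => ?_, ?_⟩
  · have := box_tridiagonal hq0 hq1 π d (i + 2) n v hv
    rwa [hii] at this
  · rintro ⟨W, hA, hA', hbot, htop⟩
    obtain ⟨U, ⟨hUW, hUA, hUA', hU0⟩, hUmin⟩ :=
      (wellFounded_lt (α := Submodule F V)).has_min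
        {U | U ≤ W ∧ (∀ v ∈ U, π (bx F q i) v ∈ U) ∧
          (∀ v ∈ U, π (bx F q (i + 2)) v ∈ U) ∧ U ≠ ⊥} ⟨W, le_rfl, hA, hA', hbot⟩
    have hinv := box_invariant π U (box_minimal_invariant hq0 hq1 π d hT i U hU0 hUA hUA'
      fun U' hle h h' h0 => hle.eq_of_not_lt (hUmin U' ⟨hle.trans hUW, h, h', h0⟩))
    rcases hirr.2 U hinv with h | h
    · exact hU0 h
    · exact htop (top_le_iff.mp (h ▸ hUW))
end
end

section
/- Let V be a finite-dimensional irreducible □_q-module of type 1 and let ^ρV denote V twisted via the automorphism ρ of □_q sending x_i ↦ x_{i+1}. Then the Drinfel'd polynomials P_V and P_{^ρV} are partners; in particular, the roots of P_{^ρV} are exactly the inverses of the roots of P_V. -/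
/-!
Let `U_0, …, U_d` be the weight spaces of `K₀` on the `□_q`-module `V`, with `σ_j` the eigenvalue
of `(e₁⁺)^j (e₀⁺)^j` on `U_0`, and mark with a prime the same data for the twist of `V`. Two facts
give the partner relation.

* Let `τ_j` be the eigenvalue of `(e₀⁻)^j (e₁⁻)^j` on `U_0`. For `v ∈ U_0` the vector
  `w = (e₀⁺)^d v` is a lowest weight vector for the second copy of `U_q(sl₂)`, so
  `σ_d (e₁⁻)^j v = (e₁⁻)^j (e₁⁺)^d w` is a known multiple of `(e₁⁺)^(d-j) w`; also `(e₀⁻)^j w` is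
  the same multiple of `(e₀⁺)^(d-j) v`. Since `e₀⁻` and `e₁⁺` commute,
  `σ_d τ_j = ([d]! [j]! / [d-j]!)² σ_(d-j)` (`WeightModule.lowering_sigma`).

* `σ'_j = τ_j` (`sigma_twist`). In the twist, `x₀` and `x₂` act as `x₃` and `x₁` do in an
  untwisted module, so for `v' ∈ U'_0` the vector `(q-q⁻¹)^(2j) σ'_j v'` is a polynomial in `x₂`
  times a polynomial in `x₀` applied to `v'`, and `x₂ v' = q^d v'`. Take `U_0`-components: the
  factor in `x₂` contributes a scalar because `U_1 + ⋯ + U_d` is `x₂`-stable; the factor in `x₀`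
  only sees the `U_j`-component of `v'`, and turns it into a multiple of its image under `(e₀⁻)^j`;
  and the equation `x₂ v' = q^d v'` shows that the `U_j`-component of `v'` is a multiple of the
  image under `(e₁⁻)^j` of its `U_0`-component. All scalars cancel.

Hence `σ_d σ'_j = ([d]! [j]! / [d-j]!)² σ_(d-j)`. For `j = d` this shows `σ_d ≠ 0`, and the general
case is the partner relation for the coefficients of the Drinfel'd polynomials. That the two
diameters agree follows from the triangular shape of `x₂` (respectively `x₀`) with respect to the
weight spaces of one structure, applied to a lowest weight vector of the other.
-/

noncomputable section

open FreeAlgebra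

variable (F : Type) [Field F]

/-- The Chevalley generators of `U_q(L(sl₂))`. -/
inductive LGen : Type
  | e0p | e0m | e1p | e1m | k0 | k0i | k1 | k1i

/-- The defining (Chevalley) relations of `U_q(L(sl₂))`. -/
inductive UqLRel (q : F) : FreeAlgebra F LGen → FreeAlgebra F LGen → Prop
  | k0inv : UqLRel q (ι F LGen.k0 * ι F LGen.k0i) 1
  | k0inv' : UqLRel q (ι F LGen.k0i * ι F LGen.k0) 1
  | k1inv : UqLRel q (ι F LGen.k1 * ι F LGen.k1i) 1
  | k1inv' : UqLRel q (ι F LGen.k1i * ι F LGen.k1) 1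
  | k01 : UqLRel q (ι F LGen.k0 * ι F LGen.k1) 1
  | k10 : UqLRel q (ι F LGen.k1 * ι F LGen.k0) 1
  | conj00p : UqLRel q (ι F LGen.k0 * ι F LGen.e0p * ι F LGen.k0i) ((q ^ 2) • ι F LGen.e0p)
  | conj00m : UqLRel q (ι F LGen.k0 * ι F LGen.e0m * ι F LGen.k0i) ((q ^ 2)⁻¹ • ι F LGen.e0m)
  | conj11p : UqLRel q (ι F LGen.k1 * ι F LGen.e1p * ι F LGen.k1i) ((q ^ 2) • ι F LGen.e1p)
  | conj11m : UqLRel q (ι F LGen.k1 * ι F LGen.e1m * ι F LGen.k1i) ((q ^ 2)⁻¹ • ι F LGen.e1m)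
  | conj01p : UqLRel q (ι F LGen.k0 * ι F LGen.e1p * ι F LGen.k0i) ((q ^ 2)⁻¹ • ι F LGen.e1p)
  | conj01m : UqLRel q (ι F LGen.k0 * ι F LGen.e1m * ι F LGen.k0i) ((q ^ 2) • ι F LGen.e1m)
  | conj10p : UqLRel q (ι F LGen.k1 * ι F LGen.e0p * ι F LGen.k1i) ((q ^ 2)⁻¹ • ι F LGen.e0p)
  | conj10m : UqLRel q (ι F LGen.k1 * ι F LGen.e0m * ι F LGen.k1i) ((q ^ 2) • ι F LGen.e0m)
  | heis0 : UqLRel q (ι F LGen.e0p * ι F LGen.e0m - ι F LGen.e0m * ι F LGen.e0p)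
      ((q - q⁻¹)⁻¹ • (ι F LGen.k0 - ι F LGen.k0i))
  | heis1 : UqLRel q (ι F LGen.e1p * ι F LGen.e1m - ι F LGen.e1m * ι F LGen.e1p)
      ((q - q⁻¹)⁻¹ • (ι F LGen.k1 - ι F LGen.k1i))
  | pm : UqLRel q (ι F LGen.e0p * ι F LGen.e1m) (ι F LGen.e1m * ι F LGen.e0p)
  | mp : UqLRel q (ι F LGen.e0m * ι F LGen.e1p) (ι F LGen.e1p * ι F LGen.e0m)
  | serre (a b : LGen)
      (hab : (a = LGen.e0p ∧ b = LGen.e1p) ∨ (a = LGen.e1p ∧ b = LGen.e0p) ∨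
             (a = LGen.e0m ∧ b = LGen.e1m) ∨ (a = LGen.e1m ∧ b = LGen.e0m)) :
      UqLRel q
        (ι F a ^ 3 * ι F b +
          ((q ^ 3 - (q⁻¹) ^ 3) / (q - q⁻¹)) • (ι F a * ι F b * ι F a ^ 2))
        (((q ^ 3 - (q⁻¹) ^ 3) / (q - q⁻¹)) • (ι F a ^ 2 * ι F b * ι F a) +
          ι F b * ι F a ^ 3)

/-- The quantum loop algebra `U_q(L(sl₂))`. -/
abbrev UqL (q : F) : Type := RingQuot (UqLRel F q)

/-- The Chevalley generators, as elements of `U_q(L(sl₂))`. -/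
def lg (q : F) (g : LGen) : UqL F q := RingQuot.mkAlgHom F (UqLRel F q) (ι F g)

/-- `ψ : □_q → U_q(L(sl₂))` is the embedding coming from the equitable presentation:
it sends `x₀ ↦ K₀ + q(q-q⁻¹)K₀e₀⁻`, `x₁ ↦ K₁ - (q-q⁻¹)e₁⁺`,
`x₂ ↦ K₁ + q(q-q⁻¹)K₁e₁⁻`, `x₃ ↦ K₀ - (q-q⁻¹)e₀⁺`. -/
def IsPsi (q : F) (ψ : BoxQ F q →ₐ[F] UqL F q) : Prop :=
  ψ (bx F q 0) = lg F q LGen.k0 + (q * (q - q⁻¹)) • (lg F q LGen.k0 * lg F q LGen.e0m) ∧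
  ψ (bx F q 1) = lg F q LGen.k1 - (q - q⁻¹) • lg F q LGen.e1p ∧
  ψ (bx F q 2) = lg F q LGen.k1 + (q * (q - q⁻¹)) • (lg F q LGen.k1 * lg F q LGen.e1m) ∧
  ψ (bx F q 3) = lg F q LGen.k0 - (q - q⁻¹) • lg F q LGen.e0p

/-- The `U_q(L(sl₂))`-module given by `Φ` has type `1` and diameter `d`:
`K₀` acts semisimply with set of distinct eigenvalues `{q^(2i-d) : 0 ≤ i ≤ d}`. -/
def UqLType1 (q : F) {V : Type} [AddCommGroup V] [Module F V]
    (Φ : UqL F q →ₐ[F] Module.End F V) (d : ℕ) : Prop :=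
  SemisimpleOn F (Φ (lg F q LGen.k0)) ∧
  EigSet F (Φ (lg F q LGen.k0)) =
    {θ : F | ∃ i : ℕ, i ≤ d ∧ θ = q ^ (2 * (i : ℤ) - (d : ℤ))}

/-- The lowest weight space `U₀`: the eigenspace of `K₀` with eigenvalue `q^(-d)`. -/
def U0 (q : F) {V : Type} [AddCommGroup V] [Module F V]
    (Φ : UqL F q →ₐ[F] Module.End F V) (d : ℕ) : Submodule F V :=
  Module.End.eigenspace (Φ (lg F q LGen.k0)) (q ^ (-(d : ℤ)))

/-- `σ j` is the eigenvalue of `(e₁⁺)^j (e₀⁺)^j` on `U₀`. -/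
def IsSigma (q : F) {V : Type} [AddCommGroup V] [Module F V]
    (Φ : UqL F q →ₐ[F] Module.End F V) (d : ℕ) (σ : ℕ → F) : Prop :=
  ∀ j : ℕ, ∀ v ∈ U0 F q Φ d,
    Φ (lg F q LGen.e1p ^ j * lg F q LGen.e0p ^ j) v = σ j • v

/-- The `q`-integer `[n]_q`. -/
def qInt (q : F) (n : ℕ) : F := (q ^ (n : ℤ) - q ^ (-(n : ℤ))) / (q - q⁻¹)

/-- The `q`-factorial `[n]_q!`. -/
def qFact (q : F) (n : ℕ) : F := ∏ i ∈ Finset.range n, qInt F q (i + 1)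

/-- The Drinfel'd polynomial `Σ_{i=0}^d (-1)^i σ_i z^i / ([i]_q!)²`. -/
def polyOf (q : F) (d : ℕ) (σ : ℕ → F) : Polynomial F :=
  ∑ i ∈ Finset.range (d + 1),
    Polynomial.C ((-1) ^ i * σ i / (qFact F q i) ^ 2) * Polynomial.X ^ i

/-- `f` is the Drinfel'd polynomial of the type-1 irreducible `□_q`-module given by `π`:
`π` is the pullback along `ψ` of a `U_q(L(sl₂))`-module structure `Φ`, which is of type 1
and diameter `d`, has 1-dimensional lowest weight space `U₀`, and `f` is built from the
eigenvalues `σ_j` of `(e₁⁺)^j(e₀⁺)^j` on `U₀`. -/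
def DrinOf (q : F) {V : Type} [AddCommGroup V] [Module F V]
    (π : BoxQ F q →ₐ[F] Module.End F V) (f : Polynomial F) : Prop :=
  ∃ ψ : BoxQ F q →ₐ[F] UqL F q, IsPsi F q ψ ∧
    ∃ Φ : UqL F q →ₐ[F] Module.End F V, Φ.comp ψ = π ∧
      ∃ (d : ℕ) (σ : ℕ → F), UqLType1 F q Φ d ∧
        Module.finrank F ↥(U0 F q Φ d) = 1 ∧
        IsSigma F q Φ d σ ∧ f = polyOf F q d σ

/-! ### Powers of `q` and `q`-integers -/

section QNumbers

variable {F}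

theorem zpow_inj_of_not_root_s16 {q : F} (hq0 : q ≠ 0) (hq1 : ∀ n : ℕ, 0 < n → q ^ n ≠ 1)
    {a b : ℤ} (h : q ^ a = q ^ b) : a = b := by
  have key : ∀ a b : ℤ, a < b → q ^ a ≠ q ^ b := by
    intro a b hab h
    obtain ⟨n, hn⟩ := Int.eq_ofNat_of_zero_le (sub_nonneg.2 hab.le)
    apply hq1 n (by omega)
    rw [← zpow_natCast, ← hn, zpow_sub₀ hq0, h, div_self (zpow_ne_zero _ hq0)]
  rcases lt_trichotomy a b with h1 | h1 | h1
  · exact absurd h (key a b h1)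
  · exact h1
  · exact absurd h.symm (key b a h1)

theorem q_sub_inv_ne_zero {q : F} (hq0 : q ≠ 0) (hq1 : ∀ n : ℕ, 0 < n → q ^ n ≠ 1) :
    q - q⁻¹ ≠ 0 := by
  intro h
  apply hq1 2 (by norm_num)
  have := sub_eq_zero.1 h
  field_simp at this
  exact this

theorem qInt_ne_zero {q : F} (hq0 : q ≠ 0) (hq1 : ∀ n : ℕ, 0 < n → q ^ n ≠ 1)
    (n : ℕ) : qInt F q (n + 1) ≠ 0 := by
  refine div_ne_zero (fun h => ?_) (q_sub_inv_ne_zero hq0 hq1)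
  have := zpow_inj_of_not_root_s16 hq0 hq1 (sub_eq_zero.1 h)
  push_cast at this
  omega

theorem qFact_ne_zero {q : F} (hq0 : q ≠ 0) (hq1 : ∀ n : ℕ, 0 < n → q ^ n ≠ 1)
    (n : ℕ) : qFact F q n ≠ 0 :=
  Finset.prod_ne_zero_iff.2 fun i _ => qInt_ne_zero hq0 hq1 i

theorem qFact_succ (q : F) (n : ℕ) : qFact F q (n + 1) = qFact F q n * qInt F q (n + 1) :=
  Finset.prod_range_succ _ _

/-- `[m][j+1] + [j-m] = [m+1][j]`. -/
theorem qInt_identity {q : F} (hq0 : q ≠ 0) (h : q - q⁻¹ ≠ 0) (m j : ℕ) :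
    qInt F q m * qInt F q (j + 1) -
        (q - q⁻¹)⁻¹ * (q ^ ((m : ℤ) - j) - q ^ ((j : ℤ) - m)) =
      qInt F q (m + 1) * qInt F q j := by
  have hm : q ^ m ≠ 0 := pow_ne_zero _ hq0
  have hj : q ^ j ≠ 0 := pow_ne_zero _ hq0
  have h2 : q ^ 2 - 1 ≠ 0 := by
    intro h'
    apply h
    field_simp
    rw [h', mul_zero]
  unfold qInt
  simp only [Nat.cast_add, Nat.cast_one, neg_add, zpow_sub₀ hq0, zpow_add₀ hq0, zpow_neg,
    zpow_natCast, zpow_one]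
  generalize q ^ m = M at *
  generalize q ^ j = J at *
  field_simp
  ring

/-- In a lowest weight module of `U_q(sl₂)`, the vector `(e⁺)^d v` is lowered by `(e⁻)^j` to a
multiple of `(e⁺)^(d-j) v`. Here `k` and `k'` play the parts of `K` and `K⁻¹`. -/
theorem sl2_lowering {q : F} (hq0 : q ≠ 0) (hq1 : ∀ n : ℕ, 0 < n → q ^ n ≠ 1)
    {V : Type} [AddCommGroup V] [Module F V] (ep em k k' : Module.End F V) (d : ℕ) (v : V)
    (hlow : em v = 0)
    (hk : ∀ m : ℕ, k ((ep ^ m) v) = q ^ (2 * (m : ℤ) - d) • (ep ^ m) v)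
    (hk' : ∀ m : ℕ, k' ((ep ^ m) v) = q ^ ((d : ℤ) - 2 * m) • (ep ^ m) v)
    (heis : ∀ u, ep (em u) - em (ep u) = (q - q⁻¹)⁻¹ • (k u - k' u)) (j : ℕ) :
    ∀ m : ℕ, m + j = d →
      (em ^ j) ((ep ^ d) v) = (qFact F q d * qFact F q j / qFact F q m) • (ep ^ m) v := by
  have hq := q_sub_inv_ne_zero hq0 hq1
  have step : ∀ m j : ℕ, m + j = d →
      em ((ep ^ (m + 1)) v) = (qInt F q (m + 1) * qInt F q j) • (ep ^ m) v := by
    intro m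
    induction m with
    | zero =>
      intro j hj
      have h1 := heis v
      have h2 := hk 0
      have h3 := hk' 0
      simp only [pow_zero, Module.End.one_apply] at h2 h3
      rw [hlow, map_zero, zero_sub, h2, h3, ← sub_smul, smul_smul] at h1
      rw [zero_add, pow_one, pow_zero, Module.End.one_apply, ← neg_inj, h1, ← neg_smul,
        ← qInt_identity hq0 hq]
      congr 1
      subst hj
      simp [qInt]
    | succ m ih =>
      intro j hj
      have h1 := heis ((ep ^ (m + 1)) v)
      rw [hk, hk', ih (j + 1) (by omega), map_smul, ← Module.End.mul_apply ep, ← pow_succ',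
        ← Module.End.mul_apply ep, ← pow_succ', ← sub_smul, smul_smul] at h1
      rw [sub_eq_iff_eq_add', ← sub_eq_iff_eq_add, ← sub_smul] at h1
      rw [← h1, ← qInt_identity hq0 hq (m + 1) j]
      subst hj
      congr 4 <;> push_cast <;> congr 1 <;> ring
  induction j with
  | zero =>
    intro m hm
    obtain rfl : m = d := by omega
    have h0 : qFact F q 0 = 1 := by simp [qFact]
    rw [h0, mul_one, div_self (qFact_ne_zero hq0 hq1 _)]
    simp
  | succ j ih =>
    intro m hm
    rw [pow_succ', Module.End.mul_apply, ih (m + 1) (by omega), map_smul,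
      step m (j + 1) (by omega), smul_smul, qFact_succ, qFact_succ]
    have h1 := qInt_ne_zero hq0 hq1 m
    have h2 := qFact_ne_zero hq0 hq1 m
    congr 1
    field_simp

end QNumbers

/-! ### Weight decompositions -/

/-- The part of a type `1` module of diameter `d` over `U_q(L(sl₂))` that the proof uses: the
operators `K = K₀`, `L = K₁`, `e₀^±`, `e₁^±`, and for each `i : ℤ` the projection `P i` onto the
eigenspace `U_i` of `K₀` with eigenvalue `q^(2i-d)` along the other eigenspaces (so that
`P i = 0` for `i < 0` and for `i > d`). -/
structure WeightModule (q : F) (d : ℕ) (V : Type) [AddCommGroup V] [Module F V] where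
  K : Module.End F V
  L : Module.End F V
  e0p : Module.End F V
  e0m : Module.End F V
  e1p : Module.End F V
  e1m : Module.End F V
  P : ℤ → Module.End F V
  P_K : ∀ i u, P i (K u) = q ^ (2 * i - (d : ℤ)) • P i u
  P_L : ∀ i u, P i (L u) = q ^ ((d : ℤ) - 2 * i) • P i u
  K_P : ∀ i u, K (P i u) = q ^ (2 * i - (d : ℤ)) • P i u
  L_P : ∀ i u, L (P i u) = q ^ ((d : ℤ) - 2 * i) • P i u
  P_e0p : ∀ i u, P (i + 1) (e0p u) = e0p (P i u)
  P_e0m : ∀ i u, P i (e0m u) = e0m (P (i + 1) u)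
  P_e1p : ∀ i u, P i (e1p u) = e1p (P (i + 1) u)
  P_e1m : ∀ i u, P (i + 1) (e1m u) = e1m (P i u)
  P_neg : ∀ i u, i < 0 → P i u = 0
  P_big : ∀ i u, (d : ℤ) < i → P i u = 0
  eq_zero : ∀ u, (∀ i : ℕ, P i u = 0) → u = 0
  P_of_K : ∀ i u, K u = q ^ (2 * i - (d : ℤ)) • u → P i u = u
  heis0 : ∀ u, e0p (e0m u) - e0m (e0p u) = (q - q⁻¹)⁻¹ • (K u - L u)
  heis1 : ∀ u, e1p (e1m u) - e1m (e1p u) = (q - q⁻¹)⁻¹ • (L u - K u)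
  comm : ∀ u, e0m (e1p u) = e1p (e0m u)

section Projections

variable {F}

/-- The eigenspaces of a diagonalizable operator come with projections. -/
theorem exists_projections {V : Type} [AddCommGroup V] [Module F V] (K : Module.End F V)
    (hK : SemisimpleOn F K) :
    ∃ pr : F → Module.End F V,
      (∀ θ, ∀ u ∈ K.eigenspace θ, pr θ u = u) ∧
      (∀ θ μ, μ ≠ θ → ∀ u ∈ K.eigenspace μ, pr θ u = 0) ∧
      (∀ u, (∀ θ, pr θ u = 0) → u = 0) := by
  classical
  have hint := DirectSum.isInternal_submodule_of_iSupIndep_of_iSup_eq_top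
    K.eigenspaces_iSupIndep hK
  let := hint.chooseDecomposition
  refine ⟨fun θ => (K.eigenspace θ).subtype ∘ₗ DirectSum.component F F _ θ ∘ₗ
    (DirectSum.decomposeLinearEquiv K.eigenspace).toLinearMap, ?_, ?_, ?_⟩
  · intro θ u hu
    exact DirectSum.decompose_of_mem_same _ hu
  · intro θ μ h u hu
    exact DirectSum.decompose_of_mem_ne _ hu h
  · intro u hu
    apply (DirectSum.decomposeLinearEquiv K.eigenspace).injective
    rw [map_zero]
    refine DFinsupp.ext fun θ => Subtype.ext ?_
    exact hu θ

theorem eigenspace_induction {V : Type} [AddCommGroup V] [Module F V] {K : Module.End F V}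
    (hK : SemisimpleOn F K) {f g : Module.End F V}
    (h : ∀ μ, ∀ u ∈ K.eigenspace μ, f u = g u) (u : V) : f u = g u := by
  have hu : u ∈ ⨆ θ : F, K.eigenspace θ := by
    rw [show (⨆ θ : F, K.eigenspace θ) = ⊤ from hK]
    trivial
  induction hu using Submodule.iSup_induction' with
  | mem μ u hu => exact h μ u hu
  | zero => simp
  | add x y _ _ hx hy => rw [map_add, map_add, hx, hy]

/-- The weight decomposition of a type `1` representation of `U_q(L(sl₂))`. -/
theorem exists_weightModule {q : F} (hq0 : q ≠ 0) (hq1 : ∀ n : ℕ, 0 < n → q ^ n ≠ 1)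
    {V : Type} [AddCommGroup V] [Module F V] (Φ : UqL F q →ₐ[F] Module.End F V) (d : ℕ)
    (hΦ : UqLType1 F q Φ d) :
    ∃ M : WeightModule F q d V,
      M.K = Φ (lg F q LGen.k0) ∧ M.L = Φ (lg F q LGen.k1) ∧
      M.e0p = Φ (lg F q LGen.e0p) ∧ M.e0m = Φ (lg F q LGen.e0m) ∧
      M.e1p = Φ (lg F q LGen.e1p) ∧ M.e1m = Φ (lg F q LGen.e1m) := by
  obtain ⟨hss, heig⟩ := hΦ
  -- each defining relation holds for the images in `End V`
  have rel : ∀ {a b : FreeAlgebra F LGen}, UqLRel F q a b →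
      (Φ.comp (RingQuot.mkAlgHom F (UqLRel F q))) a =
        (Φ.comp (RingQuot.mkAlgHom F (UqLRel F q))) b := fun h => by
    rw [AlgHom.comp_apply, AlgHom.comp_apply, RingQuot.mkAlgHom_rel F h]
  have hgen : ∀ g : LGen, (Φ.comp (RingQuot.mkAlgHom F (UqLRel F q))) (ι F g) =
      Φ (lg F q g) := fun g => rfl
  have r1 := rel UqLRel.k0inv'
  have r2 := rel UqLRel.k01
  have r3 := rel UqLRel.k1inv'
  have r4 := rel UqLRel.k10
  have c1 := rel UqLRel.conj00p
  have c2 := rel UqLRel.conj00m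
  have c3 := rel UqLRel.conj01p
  have c4 := rel UqLRel.conj01m
  have h0 := rel UqLRel.heis0
  have h1 := rel UqLRel.heis1
  have hm := rel UqLRel.mp
  simp only [map_mul, map_sub, map_smul, map_one, hgen] at r1 r2 r3 r4 c1 c2 c3 c4 h0 h1 hm
  clear rel hgen
  generalize Φ (lg F q LGen.k0) = K at *
  generalize Φ (lg F q LGen.k1) = L at *
  generalize Φ (lg F q LGen.k0i) = Ki at *
  generalize Φ (lg F q LGen.k1i) = Li at *
  generalize Φ (lg F q LGen.e0p) = e0p at *
  generalize Φ (lg F q LGen.e0m) = e0m at *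
  generalize Φ (lg F q LGen.e1p) = e1p at *
  generalize Φ (lg F q LGen.e1m) = e1m at *
  obtain rfl : Ki = L := left_inv_eq_right_inv r1 r2
  obtain rfl : Li = K := left_inv_eq_right_inv r3 r4
  obtain ⟨pr, pr_same, pr_ne, pr_zero⟩ := exists_projections Li hss
  have hq2 : q ^ 2 ≠ 0 := pow_ne_zero _ hq0
  -- operators that `q²`-commute with `K` shift the eigenspaces
  have shift : ∀ (c : F), c ≠ 0 → ∀ e : Module.End F V, Li * e * Ki = c • e →
      ∀ θ u, pr (c * θ) (e u) = e (pr θ u) := by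
    intro c hc e he θ
    have he' : ∀ u, Li (e u) = c • e (Li u) := by
      intro u
      have := congrArg (fun f : Module.End F V => f (Li u)) he
      simpa [← Module.End.mul_apply Ki, r1] using this
    refine eigenspace_induction (f := pr (c * θ) * e) (g := e * pr θ) hss ?_
    intro μ u hu
    have hu' : e u ∈ Li.eigenspace (c * μ) := by
      rw [Module.End.mem_eigenspace_iff] at hu ⊢
      rw [he', hu, map_smul, smul_smul]
    rw [Module.End.mul_apply, Module.End.mul_apply]
    by_cases h : μ = θ
    · subst h
      rw [pr_same _ _ hu, pr_same _ _ hu']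
    · rw [pr_ne _ _ h _ hu, pr_ne _ _ (fun h' => h (mul_left_cancel₀ hc h')) _ hu', map_zero]
  have prK : ∀ θ u, pr θ (Li u) = θ • pr θ u := by
    intro θ
    refine eigenspace_induction (f := pr θ * Li) (g := θ • pr θ) hss ?_
    intro μ u hu
    have hu' := Module.End.mem_eigenspace_iff.1 hu
    rw [Module.End.mul_apply, hu', map_smul, LinearMap.smul_apply]
    by_cases h : μ = θ
    · rw [h]
    · rw [pr_ne _ _ h _ hu, smul_zero, smul_zero]
  have Kpr : ∀ θ u, Li (pr θ u) = θ • pr θ u := by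
    intro θ
    refine eigenspace_induction (f := Li * pr θ) (g := θ • pr θ) hss ?_
    intro μ u hu
    have hu' := Module.End.mem_eigenspace_iff.1 hu
    rw [Module.End.mul_apply, LinearMap.smul_apply]
    by_cases h : μ = θ
    · subst h
      rw [pr_same _ _ hu, hu']
    · rw [pr_ne _ _ h _ hu, smul_zero, map_zero]
  have Linv : ∀ u, Ki (Li u) = u := fun u => by
    rw [← Module.End.mul_apply, r1, Module.End.one_apply]
  have Kinv : ∀ u, Li (Ki u) = u := fun u => by
    rw [← Module.End.mul_apply, r2, Module.End.one_apply]
  have hz : ∀ i : ℤ, q ^ ((d : ℤ) - 2 * i) * q ^ (2 * i - (d : ℤ)) = 1 := fun i => by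
    rw [← zpow_add₀ hq0]
    simp
  have up : ∀ i : ℤ, q ^ (2 * (i + 1) - (d : ℤ)) = q ^ 2 * q ^ (2 * i - (d : ℤ)) := fun i => by
    rw [← zpow_natCast, ← zpow_add₀ hq0]
    congr 1
    push_cast
    ring
  have down : ∀ i : ℤ, q ^ (2 * i - (d : ℤ)) = (q ^ 2)⁻¹ * q ^ (2 * (i + 1) - (d : ℤ)) :=
    fun i => by rw [up, inv_mul_cancel_left₀ hq2]
  have pr_out : ∀ θ, (∀ i : ℕ, i ≤ d → θ ≠ q ^ (2 * (i : ℤ) - (d : ℤ))) → ∀ u, pr θ u = 0 := by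
    intro θ hθ u
    have hbot : Li.eigenspace θ = ⊥ := by
      by_contra hne
      have hmem : θ ∈ EigSet F Li := hne
      rw [heig] at hmem
      obtain ⟨i, hi, hi'⟩ := hmem
      exact hθ i hi hi'
    have := Module.End.mem_eigenspace_iff.2 (Kpr θ u)
    rwa [hbot, Submodule.mem_bot] at this
  refine ⟨{ K := Li, L := Ki, e0p := e0p, e0m := e0m, e1p := e1p, e1m := e1m,
            P := fun i => pr (q ^ (2 * i - (d : ℤ))),
            P_K := fun i u => prK _ u,
            P_L := fun i u => ?_,
            K_P := fun i u => Kpr _ u,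
            L_P := fun i u => ?_,
            P_e0p := fun i u => ?_,
            P_e0m := fun i u => ?_,
            P_e1p := fun i u => ?_,
            P_e1m := fun i u => ?_,
            P_neg := fun i u hi => ?_,
            P_big := fun i u hi => ?_,
            eq_zero := fun u hu => pr_zero u fun θ => ?_,
            P_of_K := fun i u hu => pr_same _ _ (Module.End.mem_eigenspace_iff.2 hu),
            heis0 := fun u => ?_,
            heis1 := fun u => ?_,
            comm := fun u => ?_ }, rfl, rfl, rfl, rfl, rfl, rfl⟩
  · have := prK (q ^ (2 * i - (d : ℤ))) (Ki u)
    rw [Kinv] at this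
    rw [this, smul_smul, hz, one_smul]
  · have := congrArg Ki (Kpr (q ^ (2 * i - (d : ℤ))) u)
    rw [Linv, map_smul] at this
    nth_rewrite 2 [this]
    rw [smul_smul, hz, one_smul]
  · rw [up]
    exact shift _ hq2 _ c1 _ _
  · rw [down i]
    exact shift _ (inv_ne_zero hq2) _ c2 _ _
  · rw [down i]
    exact shift _ (inv_ne_zero hq2) _ c3 _ _
  · rw [up]
    exact shift _ hq2 _ c4 _ _
  · exact pr_out _ (fun j hj h => by have := zpow_inj_of_not_root_s16 hq0 hq1 h; omega) u
  · exact pr_out _ (fun j hj h => by have := zpow_inj_of_not_root_s16 hq0 hq1 h; omega) u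
  · by_cases hθ : ∃ i : ℕ, θ = q ^ (2 * (i : ℤ) - (d : ℤ))
    · obtain ⟨i, rfl⟩ := hθ
      exact hu i
    · exact pr_out _ (fun i _ h => hθ ⟨i, h⟩) u
  · exact congrArg (fun f : Module.End F V => f u) h0
  · exact congrArg (fun f : Module.End F V => f u) h1
  · exact congrArg (fun f : Module.End F V => f u) hm

end Projections

/-! ### Comparison of the two weight decompositions -/

section Comparison

variable {F}

/-- The operator `∏_{k<j} (X - θ_k)`. -/
def newtonOp {V : Type} [AddCommGroup V] [Module F V] (X : Module.End F V) (θ : ℕ → F) :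
    ℕ → Module.End F V
  | 0 => 1
  | j + 1 => (X - θ j • 1) * newtonOp X θ j

theorem newtonOp_succ' {V : Type} [AddCommGroup V] [Module F V] (X : Module.End F V)
    (θ : ℕ → F) (j : ℕ) : newtonOp X θ (j + 1) = newtonOp X θ j * (X - θ j • 1) := by
  have comm : ∀ c : F, Commute (X - c • 1) (newtonOp X θ j) := by
    intro c
    induction j with
    | zero => exact Commute.one_right _
    | succ j ih =>
      refine Commute.mul_right ?_ ih
      refine ((Commute.refl X).sub_left ?_).sub_right ?_
      · exact (Commute.one_left X).smul_left c
      · exact ((Commute.one_right _).smul_right _)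
  exact comm (θ j)

variable {q : F} {d : ℕ} {V : Type} [AddCommGroup V] [Module F V]

theorem WeightModule.K_of_wt (M : WeightModule F q d V) {i : ℤ} {u : V} (h : M.P i u = u) :
    M.K u = q ^ (2 * i - (d : ℤ)) • u := by
  have := M.K_P i u
  rwa [h] at this

theorem WeightModule.L_of_wt (M : WeightModule F q d V) {i : ℤ} {u : V} (h : M.P i u = u) :
    M.L u = q ^ ((d : ℤ) - 2 * i) • u := by
  have := M.L_P i u
  rwa [h] at this

theorem WeightModule.wt_e0p_pow (M : WeightModule F q d V) {v : V} (h : M.P 0 v = v) (j : ℕ) :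
    M.P j ((M.e0p ^ j) v) = (M.e0p ^ j) v := by
  induction j with
  | zero => simpa using h
  | succ j ih =>
    rw [pow_succ', Module.End.mul_apply, Nat.cast_succ, M.P_e0p, ih]

theorem WeightModule.wt_e1p_pow (M : WeightModule F q d V) {w : V} (h : M.P d w = w) (j : ℕ) :
    M.P ((d : ℤ) - j) ((M.e1p ^ j) w) = (M.e1p ^ j) w := by
  induction j with
  | zero => simpa using h
  | succ j ih =>
    rw [pow_succ', Module.End.mul_apply, M.P_e1p,
      show (d : ℤ) - ((j + 1 : ℕ) : ℤ) + 1 = (d : ℤ) - j by push_cast; ring, ih]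

/-- The eigenvalue of `(e₀⁻)^j (e₁⁻)^j` on `U₀`, expressed through the `σ`'s: this is the partner
relation on the level of coefficients. It follows by moving `(e₀⁻)^j` past `(e₁⁺)^(d-j)` in
`(e₀⁻)^j (e₁⁺)^(d-j) (e₀⁺)^d v`. -/
theorem WeightModule.lowering_sigma (M : WeightModule F q d V) (hq0 : q ≠ 0)
    (hq1 : ∀ n : ℕ, 0 < n → q ^ n ≠ 1) {v : V} (hv : M.P 0 v = v) (σ : ℕ → F)
    (hσ : ∀ j, (M.e1p ^ j) ((M.e0p ^ j) v) = σ j • v) (j m : ℕ) (hm : m + j = d) :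
    σ d • (M.e0m ^ j) ((M.e1m ^ j) v) =
      ((qFact F q d * qFact F q j / qFact F q m) ^ 2 * σ m) • v := by
  set w := (M.e0p ^ d) v with hw
  have hwt : M.P d w = w := M.wt_e0p_pow hv d
  have hlow0 : M.e0m v = 0 := by
    rw [← hv, show (0 : ℤ) = -1 + 1 by norm_num, ← M.P_e0m, M.P_neg _ _ (by norm_num)]
  have hlow1 : M.e1m w = 0 := by
    rw [← hwt, ← M.P_e1m, M.P_big _ _ (by omega)]
  have s0 := sl2_lowering hq0 hq1 M.e0p M.e0m M.K M.L d v hlow0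
    (fun n => M.K_of_wt (M.wt_e0p_pow hv n)) (fun n => M.L_of_wt (M.wt_e0p_pow hv n))
    M.heis0 j m hm
  have s1 := sl2_lowering hq0 hq1 M.e1p M.e1m M.L M.K d w hlow1
    (fun n => by
      rw [M.L_of_wt (M.wt_e1p_pow hwt n)]
      congr 2
      ring)
    (fun n => by
      rw [M.K_of_wt (M.wt_e1p_pow hwt n)]
      congr 2
      ring)
    M.heis1 j m hm
  have hc : Commute (M.e0m ^ j) (M.e1p ^ m) :=
    Commute.pow_pow (LinearMap.ext fun u => M.comm u) j m
  rw [hσ d, map_smul] at s1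
  rw [← map_smul, s1, map_smul, ← Module.End.mul_apply, hc.eq, Module.End.mul_apply, s0,
    map_smul, hσ m, smul_smul, smul_smul]
  congr 1
  ring

/-- The `q`-exponents picked up by lowering with `x₀` and by raising with `x₂` cancel. -/
theorem prod_lower_mul_prod_raise (hq0 : q ≠ 0) (j : ℕ) :
    (∏ k ∈ Finset.range j, (q ^ (2 * (k : ℤ) + 1 - d) * (q - q⁻¹))) *
      (∏ k ∈ Finset.range j, (q ^ ((d : ℤ) - 2 * k - 1) * (q - q⁻¹))) =
      (q - q⁻¹) ^ j * (q - q⁻¹) ^ j := by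
  rw [← mul_pow, ← Finset.prod_mul_distrib,
    Finset.prod_congr rfl (g := fun _ => (q - q⁻¹) * (q - q⁻¹)), Finset.prod_const,
    Finset.card_range]
  intro k _
  have h : q ^ (2 * (k : ℤ) + 1 - d) * q ^ ((d : ℤ) - 2 * k - 1) = 1 := by
    rw [← zpow_add₀ hq0, show (2 * (k : ℤ) + 1 - d) + ((d : ℤ) - 2 * k - 1) = 0 by ring,
      zpow_zero]
  rw [mul_mul_mul_comm, h, one_mul]

/-- The operator `x₂ = K₁ + q(q-q⁻¹)K₁e₁⁻` acts on `U_i` as `q^(d-2i)` plus a multiple of the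
raising operator `e₁⁻`. -/
theorem WeightModule.P_raise (M : WeightModule F q d V) (hq0 : q ≠ 0) {X2 : Module.End F V}
    (hX2 : X2 = M.L + (q * (q - q⁻¹)) • (M.L * M.e1m)) (i : ℤ) (u : V) :
    M.P (i + 1) (X2 u) = q ^ ((d : ℤ) - 2 * (i + 1)) • M.P (i + 1) u +
      (q ^ ((d : ℤ) - 2 * i - 1) * (q - q⁻¹)) • M.e1m (M.P i u) := by
  rw [hX2, LinearMap.add_apply, map_add, M.P_L, LinearMap.smul_apply, map_smul,
    Module.End.mul_apply, M.P_L, M.P_e1m, smul_smul]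
  congr 2
  rw [show (d : ℤ) - 2 * i - 1 = ((d : ℤ) - 2 * (i + 1)) + 1 by ring, zpow_add_one₀ hq0]
  ring

/-- The operator `x₀ = K₀ + q(q-q⁻¹)K₀e₀⁻` acts on `U_i` as `q^(2i-d)` plus a multiple of the
lowering operator `e₀⁻`. -/
theorem WeightModule.P_lower (M : WeightModule F q d V) (hq0 : q ≠ 0) {X0 : Module.End F V}
    (hX0 : X0 = M.K + (q * (q - q⁻¹)) • (M.K * M.e0m)) (i : ℤ) (u : V) :
    M.P i (X0 u) = q ^ (2 * i - (d : ℤ)) • M.P i u +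
      (q ^ (2 * i + 1 - (d : ℤ)) * (q - q⁻¹)) • M.e0m (M.P (i + 1) u) := by
  rw [hX0, LinearMap.add_apply, map_add, M.P_K, LinearMap.smul_apply, map_smul,
    Module.End.mul_apply, M.P_K, M.P_e0m, smul_smul]
  congr 2
  rw [show 2 * i + 1 - (d : ℤ) = (2 * i - (d : ℤ)) + 1 by ring, zpow_add_one₀ hq0]
  ring

/-- A vector is zero if its lowest component is, provided every further component is determined by
the preceding one. -/
theorem WeightModule.eq_zero_of_P_zero (M : WeightModule F q d V) {u : V}
    (h0 : M.P 0 u = 0) (hs : ∀ i : ℕ, M.P i u = 0 → M.P ((i : ℤ) + 1) u = 0) : u = 0 := by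
  refine M.eq_zero u fun i => ?_
  induction i with
  | zero => exact h0
  | succ i ih => exact_mod_cast hs i ih

/-- `x₀` lowers weights by at most one, so that `∏_{k<j} (x₀ - q^(2k-d)) u` has its `U₀`-component
determined by the `U_j`-component of `u`. -/
theorem WeightModule.P_zero_newtonOp (M : WeightModule F q d V) (hq0 : q ≠ 0)
    {X0 : Module.End F V} (hX0 : X0 = M.K + (q * (q - q⁻¹)) • (M.K * M.e0m)) (j : ℕ) (u : V) :
    M.P 0 (newtonOp X0 (fun k => q ^ (2 * (k : ℤ) - d)) j u) =
      (∏ k ∈ Finset.range j, (q ^ (2 * (k : ℤ) + 1 - d) * (q - q⁻¹))) •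
        (M.e0m ^ j) (M.P j u) := by
  induction j generalizing u with
  | zero => simp [newtonOp]
  | succ j ih =>
    rw [newtonOp_succ', Module.End.mul_apply, ih, LinearMap.sub_apply, map_sub,
      M.P_lower hq0 hX0, LinearMap.smul_apply, Module.End.one_apply, map_smul,
      add_sub_cancel_left, map_smul, smul_smul, Finset.prod_range_succ, pow_succ,
      Module.End.mul_apply, Nat.cast_succ]

/-- The components of an eigenvector of `x₂` with eigenvalue `q^d`. -/
theorem WeightModule.P_eigenvector (M : WeightModule F q d V) (hq0 : q ≠ 0)
    {X2 : Module.End F V} (hX2 : X2 = M.L + (q * (q - q⁻¹)) • (M.L * M.e1m)) {u : V}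
    (hu : X2 u = q ^ (d : ℤ) • u) (j : ℕ) :
    (∏ k ∈ Finset.range j, (q ^ (d : ℤ) - q ^ ((d : ℤ) - 2 * (k + 1)))) • M.P j u =
      (∏ k ∈ Finset.range j, (q ^ ((d : ℤ) - 2 * k - 1) * (q - q⁻¹))) •
        (M.e1m ^ j) (M.P 0 u) := by
  induction j with
  | zero => simp
  | succ j ih =>
    have h := M.P_raise hq0 hX2 j u
    rw [hu, map_smul, ← sub_eq_iff_eq_add', ← sub_smul] at h
    rw [Finset.prod_range_succ, Finset.prod_range_succ, Nat.cast_succ, mul_smul, h, smul_comm,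
      ← map_smul, ih, map_smul, smul_smul, pow_succ', Module.End.mul_apply, mul_comm]

/-- On a lowest weight vector, `x₃ = K₀ - (q-q⁻¹)e₀⁺` generates the powers of `e₀⁺`. -/
theorem WeightModule.newtonOp_raise (M : WeightModule F q d V)
    {X : Module.End F V} (hX : X = M.K - (q - q⁻¹) • M.e0p) {v : V} (hv : M.P 0 v = v) (j : ℕ) :
    newtonOp X (fun k => q ^ (2 * (k : ℤ) - d)) j v = (-(q - q⁻¹)) ^ j • (M.e0p ^ j) v := by
  induction j with
  | zero => simp [newtonOp]
  | succ j ih =>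
    rw [newtonOp, Module.End.mul_apply, ih, map_smul, LinearMap.sub_apply, hX,
      LinearMap.sub_apply, M.K_of_wt (M.wt_e0p_pow hv j), LinearMap.smul_apply,
      LinearMap.smul_apply, Module.End.one_apply, sub_sub_cancel_left, ← neg_smul, smul_smul,
      pow_succ, pow_succ' M.e0p, Module.End.mul_apply]

/-- Let `M` and `N` be the weight decompositions for a `□_q`-module and its twist, so that
`x₀` and `x₂` have expressions in terms of both. For `v` in the lowest weight space of `N`, the
eigenvalue of `(e₁⁺)^j (e₀⁺)^j` in `N` is the eigenvalue of `(e₀⁻)^j (e₁⁻)^j` in `M`. -/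
theorem sigma_twist (M N : WeightModule F q d V) (hq0 : q ≠ 0)
    (hq1 : ∀ n : ℕ, 0 < n → q ^ n ≠ 1) {X0 X2 : Module.End F V}
    (hX0 : X0 = M.K + (q * (q - q⁻¹)) • (M.K * M.e0m))
    (hX2 : X2 = M.L + (q * (q - q⁻¹)) • (M.L * M.e1m))
    (hX0' : X0 = N.K - (q - q⁻¹) • N.e0p) (hX2' : X2 = N.L - (q - q⁻¹) • N.e1p)
    {v : V} (hv : N.P 0 v = v) (hv2 : X2 v = q ^ (d : ℤ) • v) (s : F) (j : ℕ)
    (hs : (N.e1p ^ j) ((N.e0p ^ j) v) = s • v) :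
    (M.e0m ^ j) ((M.e1m ^ j) (M.P 0 v)) = s • M.P 0 v := by
  have hq := q_sub_inv_ne_zero hq0 hq1
  -- `U_1 + ⋯ + U_d` is stable under `x₂`, which acts on the quotient as `q^d`
  have hP : ∀ u, M.P 0 (X2 u) = q ^ (d : ℤ) • M.P 0 u := by
    intro u
    have := M.P_raise hq0 hX2 (-1) u
    simpa [M.P_neg (-1) u (by norm_num)] using this
  have hdown : ∀ (j : ℕ) (u : V), N.P j u = u → (-(q - q⁻¹)) ^ j • M.P 0 ((N.e1p ^ j) u) =
      (∏ k ∈ Finset.range j, (q ^ (d : ℤ) - q ^ ((d : ℤ) - 2 * (k + 1)))) • M.P 0 u := by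
    intro j
    induction j with
    | zero => intro u _; simp
    | succ j ih =>
      intro u hu
      have h1 : N.P j (N.e1p u) = N.e1p u := by
        have hu' : N.P ((j : ℤ) + 1) u = u := by exact_mod_cast hu
        rw [N.P_e1p, hu']
      have h2 : (-(q - q⁻¹)) • M.P 0 (N.e1p u) =
          (q ^ (d : ℤ) - q ^ ((d : ℤ) - 2 * (j + 1))) • M.P 0 u := by
        have h3 : (-(q - q⁻¹)) • N.e1p u = X2 u - q ^ ((d : ℤ) - 2 * (j + 1)) • u := by
          have := N.L_of_wt hu
          push_cast at this
          rw [hX2', LinearMap.sub_apply, this, LinearMap.smul_apply, sub_sub_cancel_left,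
            neg_smul]
        rw [← map_smul, h3, map_sub, hP, map_smul, sub_smul]
      rw [pow_succ, pow_succ, Module.End.mul_apply, mul_comm, mul_smul, ih _ h1, smul_comm, h2,
        Finset.prod_range_succ, mul_smul]
  have h1 := hdown j _ (N.wt_e0p_pow hv j)
  have h2 : (-(q - q⁻¹)) ^ j • M.P 0 ((N.e0p ^ j) v) =
      (∏ k ∈ Finset.range j, (q ^ (2 * (k : ℤ) + 1 - d) * (q - q⁻¹))) •
        (M.e0m ^ j) (M.P j v) := by
    rw [← map_smul, ← N.newtonOp_raise hX0' hv j, M.P_zero_newtonOp hq0 hX0]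
  have h3 := congrArg (fun u => (-(q - q⁻¹)) ^ j • u) h1
  rw [smul_comm _ (∏ k ∈ Finset.range j, _), h2, smul_comm _ (∏ k ∈ Finset.range j, _),
    ← map_smul (M.e0m ^ j), M.P_eigenvector hq0 hX2 hv2 j, map_smul, smul_smul _ _ ((M.e0m ^ j) _),
    prod_lower_mul_prod_raise hq0, hs, map_smul, smul_smul, ← mul_pow, ← mul_pow,
    neg_mul_neg] at h3
  exact (smul_right_injective V (pow_ne_zero j (mul_ne_zero hq hq)) h3).symm

theorem eq_zero_of_smul_eq_smul_add {a b : F} (hab : a ≠ b) {x y : V}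
    (h : a • x = b • x + y) (hy : y = 0) : x = 0 := by
  rw [hy, add_zero, ← sub_eq_zero, ← sub_smul] at h
  exact (smul_eq_zero.1 h).resolve_left (sub_ne_zero.2 hab)

end Comparison

/-! ### The partner relation for polynomials -/

section Partner

variable {F}

open Polynomial in
theorem polyOf_coeff (q : F) (d : ℕ) (σ : ℕ → F) (n : ℕ) :
    (polyOf F q d σ).coeff n =
      if n ≤ d then (-1) ^ n * σ n / (qFact F q n) ^ 2 else 0 := by
  simp [polyOf, coeff_C_mul, coeff_X_pow]

open Polynomial in
theorem roots_reverse_of_coeff_zero_ne_zero [IsAlgClosed F] (f : F[X]) (hf : f.coeff 0 ≠ 0) :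
    f.reverse.roots = f.roots.map (fun z => z⁻¹) := by
  have hrev : ∀ s : Multiset F, (0 : F) ∉ s →
      ((s.map (fun a => X - C a)).prod).reverse.roots = s.map (fun z => z⁻¹) := by
    intro s
    induction s using Multiset.induction_on with
    | empty =>
      intro _
      rw [Multiset.map_zero, Multiset.prod_zero, ← C_1, reverse_C, roots_C, Multiset.map_zero]
    | cons a s ih =>
      intro h0
      rw [Multiset.mem_cons, not_or] at h0
      have ha : a ≠ 0 := fun h => h0.1 h.symm
      have h1 : (X - C a : F[X]).reverse = C (-a) * (X - C a⁻¹) := by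
        have : (X - C a : F[X]) = 1 * X + C (-a) := by simp [sub_eq_add_neg]
        rw [this, reverse_add_C, reverse_mul_X, ← C_1, reverse_C, mul_sub, ← C_mul]
        simp [ha]
        ring
      have hne : ((s.map (fun a => X - C a)).prod).reverse ≠ 0 := by
        rw [Ne, reverse_eq_zero]
        exact (monic_multiset_prod_of_monic _ _ fun a _ => monic_X_sub_C a).ne_zero
      have hX : (X - C a⁻¹ : F[X]) ≠ 0 := X_sub_C_ne_zero _
      rw [Multiset.map_cons, Multiset.prod_cons, reverse_mul_of_domain, h1, mul_assoc,
        roots_C_mul _ (neg_ne_zero.2 ha), roots_mul (mul_ne_zero hX hne), roots_X_sub_C, ih h0.2,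
        Multiset.map_cons, Multiset.singleton_add]
  have hf0 : f ≠ 0 := by
    rintro rfl
    simp at hf
  have h0 : (0 : F) ∉ f.roots := by
    rw [mem_roots hf0, IsRoot, ← coeff_zero_eq_eval_zero]
    exact hf
  have hsplit := (IsAlgClosed.splits f).eq_prod_roots
  rw [hsplit, reverse_mul_of_domain, reverse_C, roots_C_mul _ (leadingCoeff_ne_zero.2 hf0),
    hrev _ h0, ← hsplit]

open Polynomial in
/-- If the coefficients of two polynomials satisfy the partner relation, then so do the
polynomials, and the roots are inverses of each other. -/
theorem partner_of_coeff [IsAlgClosed F] (f g : F[X]) (d : ℕ) (hf : ∀ n, d < n → f.coeff n = 0)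
    (hg : ∀ n, d < n → g.coeff n = 0) (h0 : f.coeff 0 ≠ 0) (hd : f.coeff d ≠ 0)
    (h : ∀ m j, m + j = d → g.coeff j * f.coeff d = f.coeff m) :
    g = f.leadingCoeff⁻¹ • f.reverse ∧ g.roots = f.roots.map (fun z => z⁻¹) := by
  have hdeg : f.natDegree = d := by
    refine le_antisymm (natDegree_le_iff_coeff_eq_zero.2 hf) (le_natDegree_of_ne_zero hd)
  have key : g = f.leadingCoeff⁻¹ • f.reverse := by
    ext j
    rw [coeff_smul, coeff_reverse, hdeg, leadingCoeff, hdeg, smul_eq_mul, eq_inv_mul_iff_mul_eq₀ hd,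
      mul_comm]
    rcases le_or_gt j d with hj | hj
    · rw [revAt_le hj, h (d - j) j (by omega)]
    · rw [revAt_eq_self_of_lt hj, hf j hj, hg j hj, zero_mul]
  refine ⟨key, ?_⟩
  rw [key, smul_eq_C_mul, roots_C_mul, roots_reverse_of_coeff_zero_ne_zero f h0]
  rw [leadingCoeff, hdeg]
  exact inv_ne_zero hd

end Partner

/-- The Drinfel'd polynomials of a type-1 irreducible `□_q`-module `V` and of its
twist `ρV` are partners: `P_{ρV}(z) = z^d P_V(1/z) / a_d`; in particular the roots of
`P_{ρV}` are exactly the inverses of the roots of `P_V`. -/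
theorem stmt16 [IsAlgClosed F] [CharZero F] (q : F) (hq0 : q ≠ 0)
    (hq1 : ∀ n : ℕ, 0 < n → q ^ n ≠ 1)
    (V : Type) [AddCommGroup V] [Module F V] [FiniteDimensional F V]
    (π : BoxQ F q →ₐ[F] Module.End F V) (hirr : IsIrrep F π)
    (hty : ∃ d : ℕ, Type1Diam F q π d)
    (ρ : BoxQ F q ≃ₐ[F] BoxQ F q) (hρ : ∀ i : ZMod 4, ρ (bx F q i) = bx F q (i + 1))
    (f g : Polynomial F)
    (hf : DrinOf F q π f) (hg : DrinOf F q (π.comp ρ.toAlgHom) g) :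
    g = f.leadingCoeff⁻¹ • f.reverse ∧ g.roots = f.roots.map (fun z => z⁻¹) := by
  obtain ⟨ψ, ⟨hψ0, hψ1, hψ2, hψ3⟩, Φ, hΦ, d, σ, htype, hdim, hσ, rfl⟩ := hf
  obtain ⟨ψ', ⟨hψ0', hψ1', hψ2', hψ3'⟩, Φ', hΦ', d', σ', htype', hdim', hσ', rfl⟩ := hg
  obtain ⟨N, hK', hL', h0p', h0m', h1p', h1m'⟩ := exists_weightModule hq0 hq1 Φ' d' htype'
  obtain ⟨M, hK, hL, h0p, h0m, h1p, h1m⟩ := exists_weightModule hq0 hq1 Φ d htype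
  -- `x₀` and `x₂` in terms of both `U_q(L(sl₂))`-structures
  have hX0 : π (bx F q 0) = M.K + (q * (q - q⁻¹)) • (M.K * M.e0m) := by
    rw [← hΦ, AlgHom.comp_apply, hψ0, hK, h0m, map_add, map_smul, map_mul]
  have hX2 : π (bx F q 2) = M.L + (q * (q - q⁻¹)) • (M.L * M.e1m) := by
    rw [← hΦ, AlgHom.comp_apply, hψ2, hL, h1m, map_add, map_smul, map_mul]
  have htw : ∀ i, π (bx F q (i + 1)) = Φ' (ψ' (bx F q i)) := by
    intro i
    rw [← hρ, ← AlgHom.comp_apply, hΦ']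
    rfl
  have hX0' : π (bx F q 0) = N.K - (q - q⁻¹) • N.e0p := by
    rw [show (0 : ZMod 4) = 3 + 1 by decide, htw, hψ3', hK', h0p', map_sub, map_smul]
  have hX2' : π (bx F q 2) = N.L - (q - q⁻¹) • N.e1p := by
    rw [show (2 : ZMod 4) = 1 + 1 by decide, htw, hψ1', hL', h1p', map_sub, map_smul]
  generalize π (bx F q 0) = X0 at *
  generalize π (bx F q 2) = X2 at *
  -- lowest weight vectors `u` and `v` of the two structures
  obtain ⟨u, hu, hu0⟩ := (Submodule.ne_bot_iff (U0 F q Φ d)).1 (fun h => by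
    rw [h, finrank_bot] at hdim
    exact zero_ne_one hdim)
  obtain ⟨v, hv, hv0⟩ := (Submodule.ne_bot_iff (U0 F q Φ' d')).1 (fun h => by
    rw [h, finrank_bot] at hdim'
    exact zero_ne_one hdim')
  have memU : ∀ w, M.P 0 w = w → w ∈ U0 F q Φ d := by
    intro w hw
    have := M.K_of_wt hw
    rw [hK] at this
    rw [U0, Module.End.mem_eigenspace_iff, this]
    simp
  have hu1 : M.P 0 u = u := by
    apply M.P_of_K
    rw [hK, Module.End.mem_eigenspace_iff.1 hu]
    simp
  have hv1 : N.P 0 v = v := by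
    apply N.P_of_K
    rw [hK', Module.End.mem_eigenspace_iff.1 hv]
    simp
  have hu2 : X0 u = q ^ (-(d : ℤ)) • u := by
    have h0 : M.e0m u = 0 := by
      rw [← hu1, show (0 : ℤ) = -1 + 1 by norm_num, ← M.P_e0m, M.P_neg _ _ (by norm_num)]
    rw [hX0, LinearMap.add_apply, LinearMap.smul_apply, Module.End.mul_apply, h0, map_zero,
      smul_zero, add_zero, M.K_of_wt hu1]
    simp
  have hv2 : X2 v = q ^ (d' : ℤ) • v := by
    have h0 : N.e1p v = 0 := by
      rw [← hv1, show (0 : ℤ) = -1 + 1 by norm_num, ← N.P_e1p, N.P_neg _ _ (by norm_num)]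
    rw [hX2', LinearMap.sub_apply, LinearMap.smul_apply, h0, smul_zero, sub_zero,
      N.L_of_wt hv1]
    simp
  -- the recursions for the components of `v` with respect to `M`, and of `u` with respect to `N`
  have recv : ∀ i : ℤ, q ^ (d' : ℤ) • M.P (i + 1) v =
      q ^ ((d : ℤ) - 2 * (i + 1)) • M.P (i + 1) v +
        (q ^ ((d : ℤ) - 2 * i - 1) * (q - q⁻¹)) • M.e1m (M.P i v) := by
    intro i
    rw [← M.P_raise hq0 hX2, hv2, map_smul]
  have recu : ∀ i : ℤ, q ^ (-(d : ℤ)) • N.P (i + 1) u =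
      q ^ (2 * (i + 1) - (d' : ℤ)) • N.P (i + 1) u + (-(q - q⁻¹)) • N.e0p (N.P i u) := by
    intro i
    rw [← map_smul, ← hu2, hX0', LinearMap.sub_apply, map_sub, N.P_K, LinearMap.smul_apply,
      map_smul, N.P_e0p, neg_smul, sub_eq_add_neg]
  have stepv : ∀ i : ℤ, (d' : ℤ) ≠ (d : ℤ) - 2 * (i + 1) → M.P i v = 0 →
      M.P (i + 1) v = 0 := fun i hi h =>
    eq_zero_of_smul_eq_smul_add (fun h' => hi (zpow_inj_of_not_root_s16 hq0 hq1 h')) (recv i)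
      (by rw [h, map_zero, smul_zero])
  have stepu : ∀ i : ℤ, -(d : ℤ) ≠ 2 * (i + 1) - (d' : ℤ) → N.P i u = 0 →
      N.P (i + 1) u = 0 := fun i hi h =>
    eq_zero_of_smul_eq_smul_add (fun h' => hi (zpow_inj_of_not_root_s16 hq0 hq1 h')) (recu i)
      (by rw [h, map_zero, smul_zero])
  have hle : d' ≤ d := by
    by_contra hlt
    refine hv0 (M.eq_zero_of_P_zero ?_ fun i => stepv i (by omega))
    exact stepv (-1) (by omega) (M.P_neg _ _ (by norm_num))
  have hge : d ≤ d' := by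
    by_contra hlt
    refine hu0 (N.eq_zero_of_P_zero ?_ fun i => stepu i (by omega))
    exact stepu (-1) (by omega) (N.P_neg _ _ (by norm_num))
  obtain rfl : d' = d := le_antisymm hle hge
  -- the `U₀`-component of `v` is a nonzero vector of `U₀`
  have hw0 : M.P 0 v ≠ 0 := fun h =>
    hv0 (M.eq_zero_of_P_zero h fun i => stepv i (by omega))
  have hw1 : M.P 0 (M.P 0 v) = M.P 0 v := M.P_of_K _ _ (M.K_P 0 v)
  have hσM : ∀ w, M.P 0 w = w → ∀ j, (M.e1p ^ j) ((M.e0p ^ j) w) = σ j • w := by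
    intro w hw j
    rw [← hσ j w (memU w hw), map_mul, map_pow, map_pow, h1p, h0p, Module.End.mul_apply]
  have hσN : ∀ j, (N.e1p ^ j) ((N.e0p ^ j) v) = σ' j • v := by
    intro j
    rw [← hσ' j v hv, map_mul, map_pow, map_pow, h1p', h0p', Module.End.mul_apply]
  have main : ∀ m j, m + j = d' → σ d' * σ' j =
      (qFact F q d' * qFact F q j / qFact F q m) ^ 2 * σ m := by
    intro m j hmj
    have h1 := M.lowering_sigma hq0 hq1 hw1 σ (hσM _ hw1) j m hmj
    rw [sigma_twist M N hq0 hq1 hX0 hX2 hX0' hX2' hv1 hv2 (σ' j) j (hσN j), smul_smul] at h1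
    exact smul_left_injective F hw0 h1
  have hfact := qFact_ne_zero hq0 hq1
  have hσ0 : σ 0 = 1 := by
    have h1 := hσM u hu1 0
    simp only [pow_zero, Module.End.one_apply] at h1
    refine smul_left_injective F hu0 ?_
    simp only [one_smul, ← h1]
  have hσd : σ d' ≠ 0 := by
    intro h
    have h1 := main 0 d' (by omega)
    rw [h, zero_mul, hσ0, mul_one] at h1
    exact pow_ne_zero 2 (div_ne_zero (mul_ne_zero (hfact _) (hfact _)) (hfact _)) h1.symm
  have hsign : ∀ n : ℕ, ((-1 : F)) ^ n ≠ 0 := fun n => pow_ne_zero _ (neg_ne_zero.2 one_ne_zero)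
  refine partner_of_coeff _ _ d' (fun n hn => ?_) (fun n hn => ?_) ?_ ?_ fun m j hmj => ?_
  · rw [polyOf_coeff, if_neg (by omega)]
  · rw [polyOf_coeff, if_neg (by omega)]
  · rw [polyOf_coeff, if_pos (Nat.zero_le _), hσ0]
    exact div_ne_zero (mul_ne_zero (hsign _) one_ne_zero) (pow_ne_zero _ (hfact _))
  · rw [polyOf_coeff, if_pos le_rfl]
    exact div_ne_zero (mul_ne_zero (hsign _) hσd) (pow_ne_zero _ (hfact _))
  · rw [polyOf_coeff, polyOf_coeff, polyOf_coeff, if_pos (by omega), if_pos le_rfl,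
      if_pos (by omega)]
    have h1 := main m j hmj
    have hs : (-1 : F) ^ j * (-1) ^ d' = (-1) ^ m := by
      rw [← hmj, pow_add, mul_left_comm, ← mul_pow, neg_one_mul, neg_neg, one_pow, mul_one]
    have e1 := hfact d'
    have e2 := hfact j
    have e3 := hfact m
    calc (-1) ^ j * σ' j / qFact F q j ^ 2 * ((-1) ^ d' * σ d' / qFact F q d' ^ 2)
        = ((-1) ^ j * (-1) ^ d') * (σ d' * σ' j) / (qFact F q j ^ 2 * qFact F q d' ^ 2) := by
          ring
      _ = (-1) ^ m * σ m / qFact F q m ^ 2 := by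
          rw [hs, h1]
          field_simp
end
end
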